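/- arXiv:1408.0529 — 6 statements merged into one kernel-verified Lean document; each statement's English description precedes it below -/
import Mathlib

section
/- Let π be a standard irreducible pair on A with a = π₀⁻¹(1), z = π₁⁻¹(1), and suppose there exist s ∈ A and k with 1 < k < N−1 such that π₀(s) = π₁(s) = k+1 and such that the sets B₁ := {b ∈ A : 2 ≤ π₀(b) ≤ k} and {b ∈ A : 2 ≤ π₁(b) ≤ k} coincide (call this set B₁) and the sets B₂ := {b ∈ A : k+2 ≤ π₀(b) ≤ N−1} and {b ∈ A : k+2 ≤ π₁(b) ≤ N−1} coincide (call this set B₂). Let q be the projection of π onto A_q := {a} ∪ B₂ ∪ {z}, and let r be the pair on A_r := {s} ∪ B₁ ∪ {z} defined by r_ε(b) = ρ_ε(τ(b)) where ρ is the projection of π onto {a} ∪ B₁ ∪ {z} and τ : A_r → {a} ∪ B₁ ∪ {z} sends s to a and fixes every element of B₁ ∪ {z}. Then q and r are irreducible, and the subgroup of Sym(A) generated by the identity-extension images of G(q) and G(r) together with all even permutations of A supported on {a, s, z} is contained in G(π). -/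
open Equiv

/-- A (labeled) pair on alphabet `A`: two bijections from `A` to positions.
Positions are `Fin (Fintype.card A)`, 0-indexed: position `j : Fin N`
corresponds to the position `j+1 ∈ {1,…,N}` of the paper. -/
abbrev RPair (A : Type*) [Fintype A] := Bool → (A ≃ Fin (Fintype.card A))

variable {A : Type*} [Fintype A]

/-- Irreducibility: `π₁(π₀⁻¹({1,…,k})) = {1,…,k}` only for `k = N`. -/
def PairIrreducible (π : RPair A) : Prop :=
  ∀ k : Fin (Fintype.card A),
    (∀ x : A, π false x ≤ k → π true x ≤ k) → (k : ℕ) + 1 = Fintype.card A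

/-- Type-ε right Rauzy induction sends `π` to `π'`.  Here `zc = π_ε⁻¹(N)` and
`zo = π_{1-ε}⁻¹(N)` are characterized as the letters of maximal position. -/
def RightMove (π π' : RPair A) : Prop :=
  ∃ ε : Bool, ∃ zc zo : A,
    (∀ x : A, π ε x ≤ π ε zc) ∧
    (∀ x : A, π (!ε) x ≤ π (!ε) zo) ∧
    π' ε = π ε ∧
    (∀ b : A, π (!ε) b ≤ π (!ε) zc → π' (!ε) b = π (!ε) b) ∧
    ((π' (!ε) zo : ℕ) = (π (!ε) zc : ℕ) + 1) ∧
    (∀ b : A, ¬ π (!ε) b ≤ π (!ε) zc → b ≠ zo → (π' (!ε) b : ℕ) = (π (!ε) b : ℕ) + 1)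

/-- Type-ε left Rauzy induction sends `π` to `π'`.  Here `ac = π_ε⁻¹(1)` and
`ao = π_{1-ε}⁻¹(1)` are characterized as the letters of minimal position. -/
def LeftMove (π π' : RPair A) : Prop :=
  ∃ ε : Bool, ∃ ac ao : A,
    (∀ x : A, π ε ac ≤ π ε x) ∧
    (∀ x : A, π (!ε) ao ≤ π (!ε) x) ∧
    π' ε = π ε ∧
    (∀ b : A, π (!ε) ac ≤ π (!ε) b → π' (!ε) b = π (!ε) b) ∧
    ((π' (!ε) ao : ℕ) = (π (!ε) ac : ℕ) - 1) ∧
    (∀ b : A, ¬ π (!ε) ac ≤ π (!ε) b → b ≠ ao → (π' (!ε) b : ℕ) = (π (!ε) b : ℕ) - 1)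

/-- The Rauzy class `R(π)`: pairs reachable by right Rauzy inductions. -/
def RClass (π : RPair A) : Set (RPair A) := {ρ | Relation.ReflTransGen RightMove π ρ}

/-- The extended Rauzy class `E(π)`: pairs reachable by left and right Rauzy inductions. -/
def EClass (π : RPair A) : Set (RPair A) :=
  {ρ | Relation.ReflTransGen (fun x y => RightMove x y ∨ LeftMove x y) π ρ}

/-- `π ∘ ν = (π₀ ∘ ν, π₁ ∘ ν)`. -/
def pairRename (π : RPair A) (ν : Equiv.Perm A) : RPair A := fun ε => ν.trans (π ε)

/-- The renaming set `G(π) = {ν : π ∘ ν ∈ E(π)}`. -/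
def renamings (π : RPair A) : Set (Equiv.Perm A) := {ν | pairRename π ν ∈ EClass π}

/-- The non-labeled permutation `π₁ ∘ π₀⁻¹`. -/
def nonlabeled (π : RPair A) : Equiv.Perm (Fin (Fintype.card A)) :=
  (π false).symm.trans (π true)

/-- The position `1` (smallest). -/
def posFirst (A : Type*) [Fintype A] [Nonempty A] : Fin (Fintype.card A) :=
  ⟨0, Fintype.card_pos⟩

/-- The position `N` (largest). -/
def posLast (A : Type*) [Fintype A] [Nonempty A] : Fin (Fintype.card A) :=
  ⟨Fintype.card A - 1, Nat.sub_lt Fintype.card_pos Nat.one_pos⟩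

/-- A pair is standard if `π₀(π₁⁻¹(1)) = π₁(π₀⁻¹(1)) = N`. -/
def PairStandard [Nonempty A] (π : RPair A) : Prop :=
  π false ((π true).symm (posFirst A)) = posLast A ∧
  π true ((π false).symm (posFirst A)) = posLast A

/-- `S` is the permutation `S(π)` of the paper. -/
def IsS [Nonempty A] (π : RPair A) (S : Equiv.Perm A) : Prop :=
  ∀ b : A,
    (π true b = posFirst A → S b = (π false).symm (posFirst A)) ∧
    (π true b ≠ posFirst A →
      (((π true b : ℕ) = (π true ((π false).symm (posLast A)) : ℕ) + 1 →
        (π false (S b) : ℕ) = (π false ((π true).symm (posLast A)) : ℕ) + 1) ∧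
      ((π true b : ℕ) ≠ (π true ((π false).symm (posLast A)) : ℕ) + 1 →
        (π false (S b) : ℕ) =
          (π false ((π true).symm
            ⟨(π true b : ℕ) - 1,
              Nat.lt_of_le_of_lt (Nat.sub_le _ _) (π true b).isLt⟩) : ℕ) + 1)))

/-- The marked letter `X(π) = π₀⁻¹(1)`. -/
def XOf [Nonempty A] (π : RPair A) : A := (π false).symm (posFirst A)

/-- `Q` is the permutation `Q(π)` of the paper (constructed from `S = S(π)`). -/
def IsQ [Nonempty A] (π : RPair A) (S Q : Equiv.Perm A) : Prop :=
  Q (XOf π) = XOf π ∧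
  ∀ b : A, b ≠ XOf π →
    (S b = XOf π → Q b = S (S b)) ∧ (S b ≠ XOf π → Q b = S b)

/-- `Λ`: the multiset of cardinalities of the orbits of `Q` on `A ∖ {X}`
(for `Q` fixing `X`): the nontrivial cycle lengths of `Q` together with one `1`
for each fixed point of `Q` other than `X`. -/
def lamOf [DecidableEq A] (Q : Equiv.Perm A) : Multiset ℕ :=
  Q.cycleType + Multiset.replicate ((Finset.univ.filter fun a => Q a = a).card - 1) 1

/-- The centralizer `Z(π)` of `(X(π), Q(π))`. -/
def ZOf [Nonempty A] (π : RPair A) (Q : Equiv.Perm A) : Set (Equiv.Perm A) :=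
  {ν | ν (XOf π) = XOf π ∧ ν⁻¹ * Q * ν = Q}

/-!
Write the two rows of a pair as words. Repeating an induction of one type rotates the part of one
row beyond the winning letter cyclically; so up to iteration the moves are reversible, lying in the
same extended Rauzy class is an equivalence relation, and the renamings of a pair form a group.

Rotations are compatible with replacing each letter by a pair of words, one for each row, as long
as these begin with the same letter and end with the same letter. The rows of `π` are
`a P₀ s T₀ z` and `z P₁ s T₁ a`. One rotation turns them into the rows `a T₀ z`, `z T₁ a` of `q`
with the words `P_ε s` inserted after the letter `a`, and another one into the rows `s P₀ z`,
`z P₁ s` of `r` with `T_ε a` inserted after `s`. An inserted word can be transported from one letter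
of a standard pair to any other, so a renaming `ν` of `q` lifts: move the inserted words from `a` to
`ν a`, then follow the moves that realise `ν` on `q` with the words carried along; the same works
for `r`. Finally, four rotations realise the 3-cycle `a ↦ s ↦ z ↦ a`, which generates the even
permutations of `{a, s, z}`.
-/

section WordPairs

variable {X Y : Type*}

/-- The two rows of a pair, each written as the word of its letters from left to right; the
repetition-free words of a pair are the case of interest, but rotations and substitutions make
sense for arbitrary words. -/
abbrev WordPair (X : Type*) := Bool → List X

namespace WordPair

/-- The pair of words with a letter map applied throughout. -/
def map (f : X → Y) (p : WordPair X) : WordPair Y := fun ε => (p ε).map f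

/-- The pair of words read from right to left. -/
def reverse (p : WordPair X) : WordPair X := fun ε => (p ε).reverse

theorem map_map {Z : Type*} (g : Y → Z) (f : X → Y) (p : WordPair X) :
    (p.map f).map g = p.map (g ∘ f) :=
  funext fun _ => List.map_map

theorem map_id (p : WordPair X) : p.map id = p :=
  funext fun _ => List.map_id _

theorem map_congr {f g : X → Y} {p : WordPair X} (h : ∀ ε, ∀ x ∈ p ε, f x = g x) :
    p.map f = p.map g :=
  funext fun ε => List.map_congr_left (h ε)

theorem map_eq_self {f : X → X} {p : WordPair X} (h : ∀ ε, ∀ x ∈ p ε, f x = x) :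
    p.map f = p :=
  (map_congr h).trans p.map_id

theorem reverse_reverse (p : WordPair X) : p.reverse.reverse = p :=
  funext fun _ => List.reverse_reverse _

theorem ext_of_row (ε : Bool) {p p' : WordPair X} (h : p ε = p' ε) (h' : p (!ε) = p' (!ε)) :
    p = p' := by
  funext δ
  cases ε <;> cases δ <;> assumption

end WordPair

/-- Iterated Rauzy induction of one type on words: while the winning letter `c` stays at the end
(resp. beginning) of its row, the part of the other row beyond `c` is rotated cyclically. Unlike
single induction steps, this relation is symmetric. -/
inductive Rotation (p p' : WordPair X) : Prop
  | right (ε : Bool) (t : List X) (c : X) (u v w : List X)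
      (winner : p ε = t ++ [c]) (loser : p (!ε) = u ++ c :: (v ++ w))
      (winner' : p' ε = t ++ [c]) (loser' : p' (!ε) = u ++ c :: (w ++ v))
  | left (ε : Bool) (t : List X) (c : X) (u v w : List X)
      (winner : p ε = c :: t) (loser : p (!ε) = v ++ w ++ c :: u)
      (winner' : p' ε = c :: t) (loser' : p' (!ε) = w ++ v ++ c :: u)

theorem Rotation.symm {p p' : WordPair X} : Rotation p p' → Rotation p' p
  | .right ε t c u v w h₁ h₂ h₁' h₂' => .right ε t c u w v h₁' h₂' h₁ h₂
  | .left ε t c u v w h₁ h₂ h₁' h₂' => .left ε t c u w v h₁' h₂' h₁ h₂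

theorem Rotation.reverse {p p' : WordPair X} (h : Rotation p p') :
    Rotation p.reverse p'.reverse := by
  cases h with
  | right ε t c u v w h₁ h₂ h₁' h₂' =>
    refine .left ε t.reverse c u.reverse w.reverse v.reverse ?_ ?_ ?_ ?_ <;>
      simp [WordPair.reverse, h₁, h₂, h₁', h₂']
  | left ε t c u v w h₁ h₂ h₁' h₂' =>
    refine .right ε t.reverse c u.reverse w.reverse v.reverse ?_ ?_ ?_ ?_ <;>
      simp [WordPair.reverse, h₁, h₂, h₁', h₂']

/-- Equivalence of pairs of words under rotations, the word version of lying in the same extended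
Rauzy class. -/
def RotationEquiv : WordPair X → WordPair X → Prop := Relation.ReflTransGen Rotation

namespace RotationEquiv

variable {p p' p'' : WordPair X}

theorem refl (p : WordPair X) : RotationEquiv p p := Relation.ReflTransGen.refl

theorem symm (h : RotationEquiv p p') : RotationEquiv p' p :=
  haveI : Std.Symm (Rotation (X := X)) := ⟨fun _ _ => Rotation.symm⟩
  Relation.ReflTransGen.stdSymm.symm _ _ h

theorem trans (h : RotationEquiv p p') (h' : RotationEquiv p' p'') : RotationEquiv p p'' :=
  Relation.ReflTransGen.trans h h'

instance : Trans (RotationEquiv (X := X)) RotationEquiv RotationEquiv := ⟨trans⟩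

end RotationEquiv

theorem Rotation.equiv {p p' : WordPair X} (h : Rotation p p') : RotationEquiv p p' :=
  Relation.ReflTransGen.single h

/-- The pair of words obtained by replacing each letter `c` in row `ε` by the word `f ε c`. -/
def WordPair.subst (f : Bool → X → List Y) (p : WordPair X) : WordPair Y :=
  fun ε => (p ε).flatMap (f ε)

/-- The images of each letter in the two rows begin with a common letter and end with a common
letter, so that a winning letter is replaced by words with a common winning letter. -/
def IsAnchored (f : Bool → X → List Y) : Prop :=
  ∀ c, (∃ y, ∀ ε, ∃ l, f ε c = y :: l) ∧ ∃ y, ∀ ε, ∃ l, f ε c = l ++ [y]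

theorem Rotation.subst {f : Bool → X → List Y} (hf : IsAnchored f) {p p' : WordPair X}
    (h : Rotation p p') : Rotation (p.subst f) (p'.subst f) := by
  cases h with
  | right ε t c u v w h₁ h₂ h₁' h₂' =>
    obtain ⟨y, hy⟩ := (hf c).2
    obtain ⟨α, hα⟩ := hy ε
    obtain ⟨β, hβ⟩ := hy (!ε)
    refine .right ε (t.flatMap (f ε) ++ α) y (u.flatMap (f (!ε)) ++ β) (v.flatMap (f (!ε)))
      (w.flatMap (f (!ε))) ?_ ?_ ?_ ?_ <;> simp [WordPair.subst, h₁, h₂, h₁', h₂', hα, hβ]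
  | left ε t c u v w h₁ h₂ h₁' h₂' =>
    obtain ⟨y, hy⟩ := (hf c).1
    obtain ⟨α, hα⟩ := hy ε
    obtain ⟨β, hβ⟩ := hy (!ε)
    refine .left ε (α ++ t.flatMap (f ε)) y (β ++ u.flatMap (f (!ε))) (v.flatMap (f (!ε)))
      (w.flatMap (f (!ε))) ?_ ?_ ?_ ?_ <;> simp [WordPair.subst, h₁, h₂, h₁', h₂', hα, hβ]

theorem RotationEquiv.subst {f : Bool → X → List Y} (hf : IsAnchored f) {p p' : WordPair X}
    (h : RotationEquiv p p') : RotationEquiv (p.subst f) (p'.subst f) :=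
  Relation.ReflTransGen.lift (WordPair.subst f) (fun _ _ => Rotation.subst hf) _ _ h

theorem WordPair.map_eq_subst (f : X → Y) (p : WordPair X) :
    p.map f = p.subst fun _ c => [f c] :=
  funext fun _ => List.map_eq_flatMap

theorem RotationEquiv.map (f : X → Y) {p p' : WordPair X} (h : RotationEquiv p p') :
    RotationEquiv (p.map f) (p'.map f) := by
  simp only [WordPair.map_eq_subst]
  exact h.subst fun c => ⟨⟨f c, fun _ => ⟨[], rfl⟩⟩, ⟨f c, fun _ => ⟨[], rfl⟩⟩⟩

end WordPairs

section Rows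

variable {X : Type*} [Fintype X] {e e' : X ≃ Fin (Fintype.card X)}

/-- The word of all letters of `X`, in order of position. -/
def row (e : X ≃ Fin (Fintype.card X)) : List X := List.ofFn e.symm

theorem mem_row (e : X ≃ Fin (Fintype.card X)) (x : X) : x ∈ row e :=
  List.mem_ofFn.2 ⟨e x, e.symm_apply_apply x⟩

theorem nodup_row (e : X ≃ Fin (Fintype.card X)) : (row e).Nodup :=
  List.nodup_ofFn.2 e.symm.injective

theorem length_row (e : X ≃ Fin (Fintype.card X)) : (row e).length = Fintype.card X :=
  List.length_ofFn

theorem pairwise_row (e : X ≃ Fin (Fintype.card X)) :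
    (row e).Pairwise fun x y => e x < e y := by
  simp [row, List.pairwise_ofFn]

theorem coe_eq_idxOf_row [DecidableEq X] (e : X ≃ Fin (Fintype.card X)) (x : X) :
    (e x : ℕ) = (row e).idxOf x := by
  have hx : (row e)[(e x : ℕ)]'(by simp [length_row]) = x := by simp [row]
  conv_rhs => rw [← hx]
  exact ((nodup_row e).idxOf_getElem _ _).symm

theorem exists_row_eq {l : List X} (hnodup : l.Nodup) (hmem : ∀ x, x ∈ l) :
    ∃ e : X ≃ Fin (Fintype.card X), row e = l := by
  classical
  have hlength : l.length = Fintype.card X := by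
    simpa using Fintype.card_congr (hnodup.getEquivOfForallMemList l hmem)
  refine ⟨((finCongr hlength.symm).trans (hnodup.getEquivOfForallMemList l hmem)).symm, ?_⟩
  exact List.ext_getElem (by simp [length_row, hlength]) fun i _ _ => by simp [row]

theorem row_eq_iff [DecidableEq X] {l : List X} (hnodup : l.Nodup) (hmem : ∀ x, x ∈ l) :
    row e = l ↔ ∀ x, (e x : ℕ) = l.idxOf x := by
  refine ⟨fun h x => h ▸ coe_eq_idxOf_row e x, fun h => ?_⟩
  obtain ⟨e', rfl⟩ := exists_row_eq hnodup hmem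
  congr 1
  ext x
  rw [h, coe_eq_idxOf_row]

theorem row_injective : Function.Injective (row : X ≃ Fin (Fintype.card X) → List X) :=
  fun e e' h => by
    classical
    ext x
    rw [coe_eq_idxOf_row, coe_eq_idxOf_row, h]

theorem forall_le_iff_exists_row_eq_append {c : X} :
    (∀ x, e x ≤ e c) ↔ ∃ t, row e = t ++ [c] := by
  have hsorted := pairwise_row e
  constructor
  · intro h
    obtain ⟨t, t', ht⟩ := List.append_of_mem (mem_row e c)
    cases t' with
    | nil => exact ⟨t, ht⟩
    | cons y t' =>
      rw [ht] at hsorted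
      exact absurd (h y) (by grind)
  · rintro ⟨t, ht⟩ x
    have hx := mem_row e x
    rw [ht, List.mem_append, List.mem_singleton] at hx
    rw [ht, List.pairwise_append] at hsorted
    rcases hx with hx | rfl
    · exact (hsorted.2.2 x hx c (List.mem_singleton_self c)).le
    · exact le_rfl

theorem row_eq_cycled_iff {u v : List X} {c z : X} (h : row e = u ++ c :: (v ++ [z])) :
    row e' = u ++ c :: z :: v ↔
      (∀ b, e b ≤ e c → e' b = e b) ∧ (e' z : ℕ) = e c + 1 ∧
        ∀ b, ¬ e b ≤ e c → b ≠ z → (e' b : ℕ) = e b + 1 := by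
  classical
  have hperm : (row e).Perm (u ++ c :: z :: v) :=
    h ▸ (List.perm_append_comm.cons c).append_left u
  have hnodup := h ▸ nodup_row e
  have hidx (b : X) : e b ≤ e c ∧ (u ++ c :: z :: v).idxOf b = e b ∨
      b = z ∧ ¬ e b ≤ e c ∧ (u ++ c :: z :: v).idxOf b = e c + 1 ∨
      b ≠ z ∧ ¬ e b ≤ e c ∧ (u ++ c :: z :: v).idxOf b = e b + 1 := by
    have hb := h ▸ mem_row e b
    simp only [Fin.le_def, coe_eq_idxOf_row e, h, List.idxOf_append, List.idxOf_cons]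
    grind
  rw [row_eq_iff (hperm.nodup (nodup_row e)) fun x => hperm.mem_iff.1 (mem_row e x)]
  simp only [Fin.ext_iff]
  grind

end Rows

section RauzyMoves

variable {X : Type*} [Fintype X] {p p' : RPair X}

/-- The two rows of a pair, as words. -/
def rows (p : RPair X) : WordPair X := fun ε => row (p ε)

theorem rows_injective : Function.Injective (rows : RPair X → WordPair X) :=
  fun _ _ h => funext fun ε => row_injective (congrFun h ε)

theorem nodup_rows (p : RPair X) (ε : Bool) : (rows p ε).Nodup := nodup_row (p ε)

theorem rightMove_iff :
    RightMove p p' ↔ ∃ (ε : Bool) (t : List X) (c : X) (u v : List X) (z : X),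
      rows p ε = t ++ [c] ∧ rows p (!ε) = u ++ c :: (v ++ [z]) ∧
        rows p' ε = t ++ [c] ∧ rows p' (!ε) = u ++ c :: z :: v := by
  constructor
  · rintro ⟨ε, c, z, hc, hz, hwinner, hcond⟩
    obtain ⟨t, ht⟩ := forall_le_iff_exists_row_eq_append.1 hc
    obtain ⟨t', ht'⟩ := forall_le_iff_exists_row_eq_append.1 hz
    have hcz : c ≠ z := by
      rintro rfl
      have hle := hz ((p (!ε)).symm (p' (!ε) c))
      rw [apply_symm_apply, Fin.le_def, hcond.2.1] at hle
      omega
    have hmem : c ∈ t' := by simpa [ht', hcz] using mem_row (p (!ε)) c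
    obtain ⟨u, v, rfl⟩ := List.append_of_mem hmem
    have hloser : row (p (!ε)) = u ++ c :: (v ++ [z]) := by simp [ht']
    exact ⟨ε, t, c, u, v, z, ht, hloser, (congrArg row hwinner).trans ht,
      (row_eq_cycled_iff hloser).2 hcond⟩
  · rintro ⟨ε, t, c, u, v, z, ht, hloser, ht', hloser'⟩
    exact ⟨ε, c, z, forall_le_iff_exists_row_eq_append.2 ⟨t, ht⟩,
      forall_le_iff_exists_row_eq_append.2 ⟨u ++ c :: v, by simpa [rows] using hloser⟩,
      row_injective (ht'.trans ht.symm), (row_eq_cycled_iff hloser).1 hloser'⟩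

theorem RightMove.rotation (h : RightMove p p') : Rotation (rows p) (rows p') := by
  obtain ⟨ε, t, c, u, v, z, ht, hloser, ht', hloser'⟩ := rightMove_iff.1 h
  exact .right ε t c u v [z] ht hloser ht' hloser'

theorem exists_rows_eq_cycled {ε : Bool} {u v : List X} {c z : X}
    (h : rows p (!ε) = u ++ c :: (v ++ [z])) :
    ∃ p' : RPair X, rows p' ε = rows p ε ∧ rows p' (!ε) = u ++ c :: z :: v := by
  have hperm : (row (p (!ε))).Perm (u ++ c :: z :: v) :=
    (List.Perm.of_eq h).trans ((List.perm_append_comm.cons c).append_left u)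
  obtain ⟨e, he⟩ := exists_row_eq (hperm.nodup (nodup_row _))
    fun x => hperm.mem_iff.1 (mem_row _ x)
  exact ⟨Function.update p (!ε) e, by simp [rows], by simp [rows, he]⟩

theorem exists_reflTransGen_rightMove (ε : Bool) {t : List X} {c : X} {u v w : List X}
    (hwinner : rows p ε = t ++ [c]) (hloser : rows p (!ε) = u ++ c :: (v ++ w)) :
    ∃ p', Relation.ReflTransGen RightMove p p' ∧
      rows p' ε = t ++ [c] ∧ rows p' (!ε) = u ++ c :: (w ++ v) := by
  induction w using List.reverseRecOn generalizing p v with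
  | nil => exact ⟨p, .refl, hwinner, by simpa using hloser⟩
  | append_singleton w z ih =>
    have hloser' : rows p (!ε) = u ++ c :: ((v ++ w) ++ [z]) := by simpa using hloser
    obtain ⟨p₁, hwinner₁, hloser₁⟩ := exists_rows_eq_cycled hloser'
    rw [hwinner] at hwinner₁
    obtain ⟨p', hp', hwinner', hloser''⟩ := ih (v := z :: v) hwinner₁ hloser₁
    exact ⟨p', hp'.head (rightMove_iff.2 ⟨ε, t, c, u, v ++ w, z, hwinner, hloser', hwinner₁,
      hloser₁⟩), hwinner', by simpa using hloser''⟩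

/-- The pair with both rows read from right to left; it exchanges left and right induction. -/
def RPair.reverse (p : RPair X) : RPair X := fun ε => (p ε).trans Fin.revPerm

theorem RPair.reverse_reverse (p : RPair X) : p.reverse.reverse = p := by
  ext
  simp [RPair.reverse]

theorem RPair.coe_reverse_apply (p : RPair X) (ε : Bool) (x : X) :
    (p.reverse ε x : ℕ) = Fintype.card X - (p ε x + 1) := rfl

theorem rows_reverse (p : RPair X) : rows p.reverse = (rows p).reverse := by
  funext ε
  refine List.ext_getElem (by simp [rows, row, WordPair.reverse]) fun i _ _ => ?_
  simp [rows, row, WordPair.reverse, RPair.reverse, Fin.rev, Nat.sub_sub, Nat.add_comm]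

theorem LeftMove.eq_or_rightMove_reverse (h : LeftMove p p') :
    p' = p ∨ RightMove p.reverse p'.reverse := by
  obtain ⟨ε, c, z, hc, hz, hwinner, hfix, hloser, hshift⟩ := h
  by_cases hcz : c = z
  · subst hcz
    exact .inl (funext fun δ => by
      rcases Bool.eq_or_eq_not δ ε with rfl | rfl
      exacts [hwinner, Equiv.ext fun b => hfix b (hz b)])
  · have hlt (b : X) (hb : b ≠ z) : (p (!ε) z : ℕ) < p (!ε) b :=
      lt_of_le_of_ne (hz b) fun h => hb ((p (!ε)).injective (Fin.ext h)).symm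
    refine .inr ⟨ε, c, z, fun x => ?_, fun x => ?_, ?_, fun b hb => ?_, ?_, fun b hb hbz => ?_⟩
    · exact Fin.rev_le_rev.2 (hc x)
    · exact Fin.rev_le_rev.2 (hz x)
    · simp [RPair.reverse, hwinner]
    · simp [RPair.reverse, hfix b (Fin.rev_le_rev.1 hb)]
    · have := hlt c hcz
      simp only [RPair.coe_reverse_apply, hloser]
      omega
    · have := hlt b hbz
      have hb' := hshift b (fun h => hb (Fin.rev_le_rev.2 h)) hbz
      simp only [RPair.coe_reverse_apply, hb']
      omega

theorem RightMove.leftMove_reverse (h : RightMove p p') : LeftMove p.reverse p'.reverse := by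
  obtain ⟨ε, c, z, hc, hz, hwinner, hfix, hloser, hshift⟩ := h
  refine ⟨ε, c, z, fun x => ?_, fun x => ?_, ?_, fun b hb => ?_, ?_, fun b hb hbz => ?_⟩
  · exact Fin.rev_le_rev.2 (hc x)
  · exact Fin.rev_le_rev.2 (hz x)
  · simp [RPair.reverse, hwinner]
  · simp [RPair.reverse, hfix b (Fin.rev_le_rev.1 hb)]
  · simp only [RPair.coe_reverse_apply, hloser]
    omega
  · simp only [RPair.coe_reverse_apply, hshift b (fun h => hb (Fin.rev_le_rev.2 h)) hbz]
    omega

theorem LeftMove.rotationEquiv (h : LeftMove p p') : RotationEquiv (rows p) (rows p') := by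
  rcases h.eq_or_rightMove_reverse with rfl | h
  · exact .refl _
  · have hrotation := h.rotation.reverse
    rw [rows_reverse, rows_reverse, WordPair.reverse_reverse, WordPair.reverse_reverse]
      at hrotation
    exact hrotation.equiv

theorem Rotation.exists_mem_EClass {m : WordPair X} (h : Rotation (rows p) m) :
    ∃ p' ∈ EClass p, rows p' = m := by
  cases h with
  | right ε t c u v w hwinner hloser hwinner' hloser' =>
    obtain ⟨p', hp', h₁, h₂⟩ := exists_reflTransGen_rightMove ε hwinner hloser
    exact ⟨p', Relation.ReflTransGen.mono (fun _ _ => Or.inl) _ _ hp',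
      WordPair.ext_of_row ε (h₁.trans hwinner'.symm) (h₂.trans hloser'.symm)⟩
  | left ε t c u v w hwinner hloser hwinner' hloser' =>
    obtain ⟨p', hp', h₁, h₂⟩ := exists_reflTransGen_rightMove (p := p.reverse) ε
      (t := t.reverse) (c := c) (u := u.reverse) (v := w.reverse) (w := v.reverse)
      (by simp [rows_reverse, WordPair.reverse, hwinner])
      (by simp [rows_reverse, WordPair.reverse, hloser])
    refine ⟨p'.reverse, ?_, WordPair.ext_of_row ε ?_ ?_⟩
    · have := Relation.ReflTransGen.lift RPair.reverse
        (fun _ _ => RightMove.leftMove_reverse) _ _ hp'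
      rw [Function.onFun, RPair.reverse_reverse] at this
      exact Relation.ReflTransGen.mono (fun _ _ => Or.inr) _ _ this
    · simp [rows_reverse, WordPair.reverse, h₁, hwinner']
    · simp [rows_reverse, WordPair.reverse, h₂, hloser']

theorem mem_EClass_iff : p' ∈ EClass p ↔ RotationEquiv (rows p) (rows p') := by
  refine ⟨fun h => ?_, fun h => ?_⟩
  · induction h with
    | refl => exact .refl _
    | tail _ hmove ih =>
      exact ih.trans (hmove.elim (fun h => h.rotation.equiv) LeftMove.rotationEquiv)
  · suffices hreach : ∀ m, RotationEquiv (rows p) m → ∃ p' ∈ EClass p, rows p' = m by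
      obtain ⟨p₁, hp₁, heq⟩ := hreach _ h
      rwa [← rows_injective heq]
    intro m hm
    induction hm with
    | refl => exact ⟨p, .refl, rfl⟩
    | tail _ hrotation ih =>
      obtain ⟨p₁, hp₁, rfl⟩ := ih
      obtain ⟨p₂, hp₂, rfl⟩ := hrotation.exists_mem_EClass
      exact ⟨p₂, hp₁.trans hp₂, rfl⟩

end RauzyMoves

section Renamings

variable {X : Type*} [Fintype X]

theorem rows_pairRename (p : RPair X) (ν : Perm X) :
    rows (pairRename p ν) = (rows p).map ν.symm := by
  funext ε
  simp [rows, row, pairRename, WordPair.map, List.map_ofFn, Function.comp_def]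

theorem mem_renamings_iff {p : RPair X} {ν : Perm X} :
    ν ∈ renamings p ↔ RotationEquiv (rows p) ((rows p).map ν) := by
  have hrename : ν ∈ renamings p ↔ RotationEquiv (rows p) ((rows p).map ν.symm) := by
    rw [← rows_pairRename]
    exact mem_EClass_iff
  refine hrename.trans ⟨fun h => ?_, fun h => ?_⟩
  · simpa [WordPair.map_map, WordPair.map_id] using (h.map ν).symm
  · simpa [WordPair.map_map, WordPair.map_id] using (h.map ν.symm).symm

/-- The renamings of a pair form a group. -/
def renamingGroup (p : RPair X) : Subgroup (Perm X) where
  carrier := renamings p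
  one_mem' := mem_renamings_iff.2 (by simpa [WordPair.map_id] using RotationEquiv.refl (rows p))
  mul_mem' {μ ν} hμ hν := by
    rw [mem_renamings_iff] at hμ hν ⊢
    simpa [WordPair.map_map] using hμ.trans (hν.map μ)
  inv_mem' {μ} hμ := by
    rw [mem_renamings_iff] at hμ ⊢
    simpa [WordPair.map_map, WordPair.map_id] using (hμ.map (μ⁻¹ : Perm X)).symm

end Renamings

section Blocks

variable {X : Type*}

/-- The rows `a T₀ z` and `z T₁ a` of a standard pair with interior `T`. -/
def standardWord (a z : X) (T : WordPair X) : WordPair X :=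
  fun ε => cond ε z a :: (T ε ++ [cond ε a z])

theorem mem_standardWord {a z : X} {T : WordPair X} {ε : Bool} {x : X} :
    x ∈ standardWord a z T ε ↔ x = a ∨ x = z ∨ x ∈ T ε := by
  cases ε <;> simp only [standardWord, cond_true, cond_false, List.mem_cons, List.mem_append,
    List.not_mem_nil, or_false] <;> tauto

theorem map_standardWord {Y : Type*} (f : X → Y) (a z : X) (T : WordPair X) :
    (standardWord a z T).map f = standardWord (f a) (f z) (T.map f) := by
  funext ε
  cases ε <;> simp [standardWord, WordPair.map]

theorem filter_standardWord {a z : X} {T : WordPair X} {ε : Bool} {f : X → Bool}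
    (ha : f a) (hz : f z) :
    (standardWord a z T ε).filter f = standardWord a z (fun ε => (T ε).filter f) ε := by
  cases ε <;> simp [standardWord, ha, hz]

/-- The rows `a P₀ s T₀ z` and `z P₁ s T₁ a` of a standard pair composed of the blocks `P` and `T`
separated by the letter `s`. -/
abbrev twoBlockWord (a s z : X) (P T : WordPair X) : WordPair X :=
  standardWord a z fun ε => P ε ++ s :: T ε

theorem ne_of_nodup_twoBlockWord {a s z : X} {P T : WordPair X} {ε : Bool}
    (h : (twoBlockWord a s z P T ε).Nodup) :
    a ≠ s ∧ a ≠ z ∧ s ≠ z ∧ (∀ x ∈ P ε, x ≠ a ∧ x ≠ s ∧ x ≠ z ∧ x ∉ T ε) ∧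
      ∀ x ∈ T ε, x ≠ a ∧ x ≠ s ∧ x ≠ z := by
  cases ε <;> simp only [standardWord, cond_true, cond_false, List.nodup_cons,
    List.nodup_append, List.mem_append, List.mem_cons] at h <;> grind

theorem twoBlockWord_equiv_exchange_left (a s z : X) (P T : WordPair X) :
    RotationEquiv (twoBlockWord a s z P T) (twoBlockWord s a z T P) := by
  let m : WordPair X := fun ε =>
    cond ε (z :: (T true ++ a :: (P true ++ [s]))) (a :: (P false ++ s :: (T false ++ [z])))
  have hright : Rotation (twoBlockWord a s z P T) m :=
    .right false (a :: (P false ++ s :: T false)) z [] (P true ++ [s]) (T true ++ [a])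
      (by simp [standardWord]) (by simp [standardWord]) (by simp [m]) (by simp [m])
  have hleft : Rotation m (twoBlockWord s a z T P) :=
    .left true (T true ++ a :: (P true ++ [s])) z [] (a :: P false) (s :: T false)
      (by simp [m]) (by simp [m]) (by simp [standardWord]) (by simp [standardWord])
  exact hright.equiv.trans hleft.equiv

theorem twoBlockWord_equiv_exchange_right (a s z : X) (P T : WordPair X) :
    RotationEquiv (twoBlockWord a s z P T) (twoBlockWord a z s T P) := by
  let m : WordPair X := fun ε =>
    cond ε (s :: (T true ++ z :: (P true ++ [a]))) (a :: (P false ++ s :: (T false ++ [z])))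
  have hleft : Rotation (twoBlockWord a s z P T) m :=
    .left false (P false ++ s :: (T false ++ [z])) a [] (z :: P true) (s :: T true)
      (by simp [standardWord]) (by simp [standardWord]) (by simp [m]) (by simp [m])
  have hright : Rotation m (twoBlockWord a z s T P) :=
    .right true (s :: (T true ++ z :: P true)) a [] (P false ++ [s]) (T false ++ [z])
      (by simp [m]) (by simp [m]) (by simp [standardWord]) (by simp [standardWord])
  exact hleft.equiv.trans hright.equiv

theorem twoBlockWord_equiv_cycle (a s z : X) (P T : WordPair X) :
    RotationEquiv (twoBlockWord a s z P T) (twoBlockWord s z a P T) :=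
  (twoBlockWord_equiv_exchange_left a s z P T).trans (twoBlockWord_equiv_exchange_right s a z T P)

variable [DecidableEq X] {x y z : X} {B p : WordPair X}

theorem map_swap_mul_swap_twoBlockWord {a s : X} {P T : WordPair X}
    (hnodup : ∀ ε, (twoBlockWord a s z P T ε).Nodup) :
    (twoBlockWord a s z P T).map (swap a s * swap s z) = twoBlockWord s z a P T := by
  have hne (ε : Bool) := ne_of_nodup_twoBlockWord (hnodup ε)
  obtain ⟨has, haz, hsz, -⟩ := hne false
  have hfix (ε : Bool) (x : X) (hx : x ∈ P ε ∨ x ∈ T ε) : (swap a s * swap s z) x = x := by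
    have := hne ε
    rw [Perm.mul_apply, swap_apply_of_ne_of_ne, swap_apply_of_ne_of_ne] <;> grind
  have ha : (swap a s * swap s z) a = s := by
    rw [Perm.mul_apply, swap_apply_of_ne_of_ne has haz, swap_apply_left]
  have hs : (swap a s * swap s z) s = z := by
    rw [Perm.mul_apply, swap_apply_left, swap_apply_of_ne_of_ne haz.symm hsz.symm]
  have hz : (swap a s * swap s z) z = a := by simp
  have hP := WordPair.map_eq_self fun ε x hx => hfix ε x (.inl hx)
  have hT := WordPair.map_eq_self fun ε x hx => hfix ε x (.inr hx)
  rw [map_standardWord, ha, hz]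
  congr 1
  funext ε
  rw [WordPair.map, List.map_append, List.map_cons, hs]
  exact congrArg₂ (· ++ z :: ·) (congrFun hP ε) (congrFun hT ε)

theorem filter_twoBlockWord_right {a s : X} {P T : WordPair X} {B : Finset X} {ε : Bool}
    (hnodup : (twoBlockWord a s z P T ε).Nodup) (hT : ∀ x, x ∈ T ε ↔ x ∈ B) :
    (twoBlockWord a s z P T ε).filter (· ∈ insert a (insert z B)) = standardWord a z T ε := by
  obtain ⟨has, -, hsz, hP, hT'⟩ := ne_of_nodup_twoBlockWord hnodup
  have hPnil : (P ε).filter (· ∈ insert a (insert z B)) = [] := by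
    simp only [List.filter_eq_nil_iff]
    grind
  have hTself : (T ε).filter (· ∈ insert a (insert z B)) = T ε := by
    simp only [List.filter_eq_self]
    grind
  have hs : s ∉ insert a (insert z B) := by grind
  rw [filter_standardWord (by simp) (by simp)]
  simp only [standardWord, List.filter_append, List.filter_cons, hPnil, hTself, hs, decide_false,
    Bool.false_eq_true, if_false, List.nil_append]

theorem filter_twoBlockWord_left {a s : X} {P T : WordPair X} {B : Finset X} {ε : Bool}
    (hnodup : (twoBlockWord a s z P T ε).Nodup) (hP : ∀ x, x ∈ P ε ↔ x ∈ B) :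
    (twoBlockWord a s z P T ε).filter (· ∈ insert a (insert z B)) = standardWord a z P ε := by
  obtain ⟨has, -, hsz, hP', hT⟩ := ne_of_nodup_twoBlockWord hnodup
  have hPself : (P ε).filter (· ∈ insert a (insert z B)) = P ε := by
    simp only [List.filter_eq_self]
    grind
  have hTnil : (T ε).filter (· ∈ insert a (insert z B)) = [] := by
    simp only [List.filter_eq_nil_iff]
    grind
  have hs : s ∉ insert a (insert z B) := by grind
  rw [filter_standardWord (by simp) (by simp)]
  simp only [standardWord, List.filter_append, List.filter_cons, hPself, hTnil, hs, decide_false,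
    Bool.false_eq_true, if_false, List.append_nil]

/-- The pair of words in which the word `B ε ++ [y]` is inserted after the letter `x` of row `ε`. -/
def insertAfter (x : X) (B : WordPair X) (y : X) (p : WordPair X) : WordPair X :=
  p.subst fun ε c => if c = x then c :: (B ε ++ [y]) else [c]

theorem insertAfter_apply {ε : Bool} {u v : List X} (h : p ε = u ++ x :: v)
    (hnodup : (p ε).Nodup) : insertAfter x B y p ε = u ++ x :: (B ε ++ y :: v) := by
  have hid (l : List X) (hl : x ∉ l) :
      (l.flatMap fun c => if c = x then c :: (B ε ++ [y]) else [c]) = l := by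
    conv_rhs => rw [← List.flatMap_singleton' l]
    exact List.flatMap_congr fun c hc => if_neg (ne_of_mem_of_not_mem hc hl)
  rw [h, List.nodup_middle, List.nodup_cons, List.mem_append, not_or] at hnodup
  simp [insertAfter, WordPair.subst, h, hid u hnodup.1.1, hid v hnodup.1.2]

theorem map_insertAfter (μ : Perm X) (p : WordPair X) :
    (insertAfter x B y p).map μ = insertAfter (μ x) (B.map μ) (μ y) (p.map μ) := by
  funext ε
  simp only [insertAfter, WordPair.subst, WordPair.map, List.map_flatMap, List.flatMap_map]
  refine List.flatMap_congr fun c _ => ?_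
  by_cases hc : c = x <;> simp [hc]

theorem RotationEquiv.insertAfter_congr (x : X) (B : WordPair X) (y : X) {p p' : WordPair X}
    (h : RotationEquiv p p') :
    RotationEquiv (insertAfter x B y p) (insertAfter x B y p') := by
  refine h.subst fun c => ⟨⟨c, fun ε => ?_⟩, ?_⟩
  · split_ifs
    exacts [⟨_, rfl⟩, ⟨_, rfl⟩]
  · by_cases hc : c = x
    · exact ⟨y, fun ε => ⟨c :: B ε, by simp [hc]⟩⟩
    · exact ⟨c, fun ε => ⟨[], by simp [hc]⟩⟩

theorem insertAfter_equiv_of_last {ε : Bool} {t t' : List X} (hz : p ε = t ++ [z])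
    (hx : p (!ε) = t' ++ [x]) (hxt : x ∈ t) (hzt' : z ∈ t') (hnodup : ∀ ε, (p ε).Nodup) :
    RotationEquiv (insertAfter x B y p) (insertAfter z B y p) := by
  obtain ⟨g, h, rfl⟩ := List.append_of_mem hxt
  obtain ⟨u, w, rfl⟩ := List.append_of_mem hzt'
  have hxε : insertAfter x B y p ε = g ++ x :: (B ε ++ y :: (h ++ [z])) :=
    insertAfter_apply (by simpa using hz) (hnodup _)
  have hx' : insertAfter x B y p (!ε) = u ++ z :: (w ++ x :: (B (!ε) ++ [y])) := by
    simpa using insertAfter_apply (B := B) (y := y) hx (hnodup _)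
  have hzε : insertAfter z B y p ε = g ++ x :: (h ++ z :: (B ε ++ [y])) := by
    simpa using insertAfter_apply (B := B) (y := y) hz (hnodup _)
  have hz' : insertAfter z B y p (!ε) = u ++ z :: (B (!ε) ++ y :: (w ++ [x])) :=
    insertAfter_apply (by simpa using hx) (hnodup _)
  let m := Function.update (insertAfter z B y p) ε (insertAfter x B y p ε)
  have hmε : m ε = insertAfter x B y p ε := Function.update_self ..
  have hm' : m (!ε) = insertAfter z B y p (!ε) := Function.update_of_ne (by simp) ..
  have hwinner_z : Rotation (insertAfter x B y p) m :=
    .right ε (g ++ x :: (B ε ++ y :: h)) z u (w ++ [x]) (B (!ε) ++ [y])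
      (by simp [hxε]) (by simp [hx']) (by simp [hmε, hxε]) (by simp [hm', hz'])
  have hwinner_x : Rotation m (insertAfter z B y p) :=
    .right (!ε) (u ++ z :: (B (!ε) ++ y :: w)) x g (B ε ++ [y]) (h ++ [z])
      (by simp [hm', hz']) (by simp [hmε, hxε]) (by simp [hz']) (by simp [hzε])
  exact hwinner_z.equiv.trans hwinner_x.equiv

theorem insertAfter_equiv_of_mem {ε : Bool} {t u v : List X} (hz : p ε = t ++ [z])
    (hz' : p (!ε) = u ++ z :: v) (hxt : x ∈ t) (hxv : x ∈ v) (hnodup : ∀ ε, (p ε).Nodup) :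
    RotationEquiv (insertAfter x B y p) (insertAfter z B y p) := by
  obtain ⟨v₁, v₂, rfl⟩ := List.append_of_mem hxv
  let m := Function.update p (!ε) (u ++ z :: (v₂ ++ (v₁ ++ [x])))
  have hmε : m ε = t ++ [z] := (Function.update_of_ne (by simp) ..).trans hz
  have hm' : m (!ε) = u ++ z :: (v₂ ++ (v₁ ++ [x])) := Function.update_self ..
  have hrotation : RotationEquiv p m :=
    (Rotation.right ε t z u (v₁ ++ [x]) v₂ hz (by simp [hz']) hmε hm').equiv
  have hperm : (p (!ε)).Perm (m (!ε)) := by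
    rw [hz', hm', List.append_cons v₁]
    exact (List.perm_append_comm.cons z).append_left u
  have hmnodup (δ : Bool) : (m δ).Nodup := by
    rcases Bool.eq_or_eq_not δ ε with rfl | rfl
    exacts [hmε ▸ hz ▸ hnodup δ, hperm.nodup (hnodup _)]
  calc
    RotationEquiv (insertAfter x B y p) (insertAfter x B y m) := hrotation.insertAfter_congr x B y
    RotationEquiv _ (insertAfter z B y m) :=
      insertAfter_equiv_of_last (t' := u ++ z :: (v₂ ++ v₁)) hmε (by simp [hm']) hxt (by simp)
        hmnodup
    RotationEquiv _ (insertAfter z B y p) := (hrotation.insertAfter_congr z B y).symm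

theorem insertAfter_standardWord_equiv {a x' : X} {T : WordPair X}
    (hnodup : ∀ ε, (standardWord a z T ε).Nodup) (hx : ∀ ε, x ∈ standardWord a z T ε)
    (hx' : ∀ ε, x' ∈ standardWord a z T ε) :
    RotationEquiv (insertAfter x B y (standardWord a z T))
      (insertAfter x' B y (standardWord a z T)) := by
  suffices hlast : ∀ c, (∀ ε, c ∈ standardWord a z T ε) →
      RotationEquiv (insertAfter c B y (standardWord a z T))
        (insertAfter z B y (standardWord a z T)) from
    (hlast x hx).trans (hlast x' hx').symm
  intro c hc
  by_cases hcz : c = z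
  · exact hcz ▸ .refl _
  · have hcfalse := hc false
    have hctrue := hc true
    refine insertAfter_equiv_of_mem (ε := false) (t := a :: T false) (u := [])
      (v := T true ++ [a]) rfl rfl ?_ ?_ hnodup
    · simpa [standardWord, hcz] using hcfalse
    · simpa [standardWord, hcz] using hctrue

theorem insertAfter_standardWord_first {a : X} {T : WordPair X}
    (hnodup : ∀ ε, (standardWord a z T ε).Nodup) :
    insertAfter a B y (standardWord a z T) false = a :: (B false ++ y :: (T false ++ [z])) ∧
      insertAfter a B y (standardWord a z T) true = z :: (T true ++ a :: (B true ++ [y])) :=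
  ⟨insertAfter_apply (u := []) rfl (hnodup false),
    insertAfter_apply (u := z :: T true) rfl (hnodup true)⟩

theorem twoBlockWord_equiv_insertAfter_left {a s : X} {P T : WordPair X}
    (hnodup : ∀ ε, (standardWord a z T ε).Nodup) :
    RotationEquiv (twoBlockWord a s z P T) (insertAfter a P s (standardWord a z T)) := by
  obtain ⟨hfalse, htrue⟩ := insertAfter_standardWord_first (B := P) (y := s) hnodup
  exact (Rotation.right false (a :: (P false ++ s :: T false)) z [] (P true ++ [s])
    (T true ++ [a]) (by simp [standardWord]) (by simp [standardWord]) (by simp [hfalse])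
    (by simp [htrue])).equiv

theorem twoBlockWord_equiv_insertAfter_right {a s : X} {P T : WordPair X}
    (hnodup : ∀ ε, (standardWord s z P ε).Nodup) :
    RotationEquiv (twoBlockWord a s z P T) (insertAfter s T a (standardWord s z P)) := by
  obtain ⟨hfalse, htrue⟩ := insertAfter_standardWord_first (B := T) (y := a) hnodup
  exact (Rotation.left true (P true ++ s :: (T true ++ [a])) z [] (a :: P false)
    (s :: T false) (by simp [standardWord]) (by simp [standardWord]) (by simp [htrue])
    (by simp [hfalse])).equiv

theorem RotationEquiv.map_of_insertAfter {a : X} {T : WordPair X} (μ : Perm X)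
    (hp : RotationEquiv p (insertAfter a B y (standardWord a z T)))
    (hnodup : ∀ ε, (standardWord a z T ε).Nodup) (hμ : ∀ ε, μ a ∈ standardWord a z T ε)
    (hB : B.map μ = B) (hy : μ y = y)
    (h : RotationEquiv (standardWord a z T) ((standardWord a z T).map μ)) :
    RotationEquiv p (p.map μ) := by
  have ha (ε : Bool) : a ∈ standardWord a z T ε := by cases ε <;> simp [standardWord]
  have hmap := map_insertAfter (x := a) (B := B) (y := y) μ (standardWord a z T)
  rw [hB, hy] at hmap
  exact calc
    RotationEquiv p (insertAfter a B y (standardWord a z T)) := hp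
    RotationEquiv _ (insertAfter (μ a) B y (standardWord a z T)) :=
      insertAfter_standardWord_equiv hnodup ha hμ
    RotationEquiv _ (insertAfter (μ a) B y ((standardWord a z T).map μ)) :=
      h.insertAfter_congr (μ a) B y
    RotationEquiv _ (p.map μ) := hmap ▸ (hp.map μ).symm

end Blocks

section Projections

variable {X Y : Type*} [Fintype X] [Fintype Y] {e : X ≃ Fin (Fintype.card X)}

theorem eq_of_pairwise_lt_of_mem_iff {l l' : List X} (hl : l.Pairwise fun x y => e x < e y)
    (hl' : l'.Pairwise fun x y => e x < e y) (hmem : ∀ x, x ∈ l ↔ x ∈ l') : l = l' :=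
  haveI : Std.Irrefl fun x y : X => e x < e y := ⟨fun _ => lt_irrefl _⟩
  haveI : Std.Antisymm fun x y : X => e x < e y := ⟨fun _ _ h h' => (lt_asymm h h').elim⟩
  hl.eq_of_mem_iff hl' hmem

theorem map_row_eq_filter [DecidableEq X] {S : Finset X} {f : Y ≃ Fin (Fintype.card Y)} {g : Y → X}
    (hg : ∀ x, x ∈ S ↔ ∃ y, g y = x)
    (hf : ∀ y, (f y : ℕ) = (S.filter fun x => e x < e (g y)).card) :
    (row f).map g = (row e).filter (· ∈ S) := by
  have hmono {y y' : Y} (h : f y < f y') : e (g y) < e (g y') := by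
    contrapose! h
    rw [Fin.le_def, hf, hf]
    exact Finset.card_le_card fun x hx => by
      rw [Finset.mem_filter] at hx ⊢
      exact ⟨hx.1, hx.2.trans_le h⟩
  refine eq_of_pairwise_lt_of_mem_iff (List.pairwise_map.2 ((pairwise_row f).imp hmono))
    ((pairwise_row e).filter _) fun x => ?_
  simp [mem_row, hg]

theorem row_eq_of_positions {a s z : X} {k : ℕ} {P T : List X} (ha : (e a : ℕ) = 0)
    (hs : (e s : ℕ) = k) (hz : (e z : ℕ) = Fintype.card X - 1)
    (hk₀ : 0 < k) (hk : k < Fintype.card X - 1)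
    (hP : P.Pairwise fun x y => e x < e y) (hT : T.Pairwise fun x y => e x < e y)
    (hPmem : ∀ x, x ∈ P ↔ 1 ≤ (e x : ℕ) ∧ (e x : ℕ) ≤ k - 1)
    (hTmem : ∀ x, x ∈ T ↔ k + 1 ≤ (e x : ℕ) ∧ (e x : ℕ) ≤ Fintype.card X - 2) :
    row e = a :: (P ++ s :: (T ++ [z])) := by
  refine eq_of_pairwise_lt_of_mem_iff (pairwise_row e) ?_ fun x => ?_
  · simp only [List.pairwise_cons, List.pairwise_append, List.mem_append, List.mem_cons]
    grind
  · have hx : (e x : ℕ) < Fintype.card X := (e x).isLt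
    have hinj {y : X} (h : (e x : ℕ) = e y) : x = y := e.injective (Fin.ext h)
    simp only [List.mem_append, List.mem_cons, mem_row, hPmem, hTmem, true_iff]
    grind

theorem exists_rows_eq_twoBlockWord {p : RPair X} {a s z : X} {k : ℕ} {B₁ B₂ : Finset X}
    (ha : (p false a : ℕ) = 0) (ha' : (p true a : ℕ) = Fintype.card X - 1)
    (hz : (p false z : ℕ) = Fintype.card X - 1) (hz' : (p true z : ℕ) = 0)
    (hs : ∀ ε, (p ε s : ℕ) = k) (hk₀ : 0 < k) (hk : k < Fintype.card X - 1)
    (hB₁ : ∀ ε x, x ∈ B₁ ↔ 1 ≤ (p ε x : ℕ) ∧ (p ε x : ℕ) ≤ k - 1)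
    (hB₂ : ∀ ε x, x ∈ B₂ ↔ k + 1 ≤ (p ε x : ℕ) ∧ (p ε x : ℕ) ≤ Fintype.card X - 2) :
    ∃ P T : WordPair X, rows p = twoBlockWord a s z P T ∧
      (∀ ε x, x ∈ P ε ↔ x ∈ B₁) ∧ ∀ ε x, x ∈ T ε ↔ x ∈ B₂ := by
  classical
  refine ⟨fun ε => (row (p ε)).filter (· ∈ B₁), fun ε => (row (p ε)).filter (· ∈ B₂), ?_,
    fun ε x => by simp [mem_row], fun ε x => by simp [mem_row]⟩
  funext ε
  simp only [standardWord, List.append_assoc, List.cons_append]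
  cases ε
  · exact row_eq_of_positions ha (hs _) hz hk₀ hk ((pairwise_row _).filter _)
      ((pairwise_row _).filter _) (by simp [mem_row, hB₁ false]) (by simp [mem_row, hB₂ false])
  · exact row_eq_of_positions hz' (hs _) ha' hk₀ hk ((pairwise_row _).filter _)
      ((pairwise_row _).filter _) (by simp [mem_row, hB₁ true]) (by simp [mem_row, hB₂ true])

end Projections

section StandardPairs

variable {X Y : Type*} [Fintype X]

theorem PairStandard.coe_true_eq [Nonempty X] {p : RPair X} {x : X} (hp : PairStandard p)
    (hx : (p false x : ℕ) = 0) :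
    (p true x : ℕ) = Fintype.card X - 1 := by
  obtain rfl : (p false).symm (posFirst X) = x := (symm_apply_eq _).2 (Fin.ext hx.symm)
  exact congrArg Fin.val hp.2

theorem PairStandard.coe_false_eq [Nonempty X] {p : RPair X} {x : X} (hp : PairStandard p)
    (hx : (p true x : ℕ) = 0) :
    (p false x : ℕ) = Fintype.card X - 1 := by
  obtain rfl : (p true).symm (posFirst X) = x := (symm_apply_eq _).2 (Fin.ext hx.symm)
  exact congrArg Fin.val hp.1

theorem pairIrreducible_of_first_eq_last {p : RPair X} {c : X} {t t' : List X}
    (hfirst : rows p false = c :: t) (hlast : rows p true = t' ++ [c]) : PairIrreducible p := by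
  classical
  intro k hk
  have hzero : (p false c : ℕ) = 0 := by
    rw [coe_eq_idxOf_row, ← rows, hfirst, List.idxOf_cons_self]
  have hck : p true c ≤ k := hk c (by simp [Fin.le_def, hzero])
  have hmax := forall_le_iff_exists_row_eq_append.2 ⟨t', hlast⟩
  have hlast_le := (hmax ((p true).symm ⟨Fintype.card X - 1, by omega⟩)).trans hck
  rw [apply_symm_apply, Fin.le_def] at hlast_le
  dsimp only at hlast_le
  omega

theorem pairIrreducible_of_map_rows_eq {p : RPair X} {g : X → Y} (hg : Function.Injective g)
    {a z : Y} {T : WordPair Y} (h : (rows p).map g = standardWord a z T) :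
    PairIrreducible p := by
  obtain ⟨c, t, hfirst, hc, -⟩ := List.map_eq_cons_iff.1 (congrFun h false)
  obtain ⟨t', l, hlast, -, hl⟩ := List.map_eq_append_iff.1
    (show (rows p true).map g = (z :: T true) ++ [a] from congrFun h true)
  obtain ⟨c', rfl, hc'⟩ := List.map_eq_singleton_iff.1 hl
  obtain rfl : c = c' := hg (hc.trans hc'.symm)
  exact pairIrreducible_of_first_eq_last hfirst hlast

theorem nodup_standardWord_of_map_val_rows_eq {S : Finset Y} {q : RPair S} {a z : Y}
    {T : WordPair Y}
    (hq : (rows q).map Subtype.val = standardWord a z T) (ε : Bool) :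
    (standardWord a z T ε).Nodup :=
  hq ▸ (nodup_rows q ε).map Subtype.val_injective

theorem mem_standardWord_iff_of_map_val_rows_eq {S : Finset Y} {q : RPair S} {a z : Y}
    {T : WordPair Y}
    (hq : (rows q).map Subtype.val = standardWord a z T) (ε : Bool) (x : Y) :
    x ∈ standardWord a z T ε ↔ x ∈ S := by
  simp [← hq, WordPair.map, rows, mem_row]

variable [DecidableEq X] {p : RPair X} {a s z : X}

theorem ofSubtype_mem_renamings {S : Finset X} {q : RPair S} {y : X} {B T : WordPair X}
    (hq : (rows q).map Subtype.val = standardWord a z T)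
    (hp : RotationEquiv (rows p) (insertAfter a B y (standardWord a z T)))
    (hB : ∀ ε, ∀ b ∈ B ε, b ∉ S) (hy : y ∉ S) {ν : Perm S} (hν : ν ∈ renamings q) :
    Perm.ofSubtype ν ∈ renamings p := by
  have hmem (ε : Bool) (x : X) := mem_standardWord_iff_of_map_val_rows_eq hq ε x
  have hcomp : ⇑(Perm.ofSubtype ν) ∘ ((↑) : S → X) = (↑) ∘ ν :=
    funext fun x => Perm.ofSubtype_apply_coe ν x
  have ha : a ∈ S := (hmem false a).1 (by simp [standardWord])
  refine mem_renamings_iff.2 <| hp.map_of_insertAfter _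
    (nodup_standardWord_of_map_val_rows_eq hq) (fun ε => ?_) ?_ ?_ ?_
  · rw [hmem, ← Subtype.coe_mk a ha, Perm.ofSubtype_apply_coe]
    exact (ν _).2
  · exact WordPair.map_eq_self fun ε b hb => Perm.ofSubtype_apply_of_not_mem ν (hB ε b hb)
  · exact Perm.ofSubtype_apply_of_not_mem ν hy
  · rw [← hq, WordPair.map_map, hcomp, ← WordPair.map_map]
    exact (mem_renamings_iff.1 hν).map _

theorem ofSubtype_mem_renamings_of_right_block {S : Finset X} {q : RPair S} {P T : WordPair X}
    (hp : rows p = twoBlockWord a s z P T)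
    (hq : (rows q).map Subtype.val = standardWord a z T) {ν : Perm S} (hν : ν ∈ renamings q) :
    Perm.ofSubtype ν ∈ renamings p := by
  have hnodup (ε : Bool) := ne_of_nodup_twoBlockWord (hp ▸ nodup_rows p ε)
  have hmem (ε : Bool) (x : X) := mem_standardWord_iff_of_map_val_rows_eq hq ε x
  refine ofSubtype_mem_renamings hq (B := P) (y := s) ?_ (fun ε b hb => ?_) ?_ hν
  · exact hp ▸ twoBlockWord_equiv_insertAfter_left (nodup_standardWord_of_map_val_rows_eq hq)
  · rw [← hmem ε, mem_standardWord]
    have := hnodup ε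
    grind
  · rw [← hmem false, mem_standardWord]
    have := hnodup false
    grind

theorem ofSubtype_mem_renamings_of_left_block {S : Finset X} {r : RPair S} {P T : WordPair X}
    (hp : rows p = twoBlockWord a s z P T)
    (hr : (rows r).map Subtype.val = standardWord s z P) {ν : Perm S} (hν : ν ∈ renamings r) :
    Perm.ofSubtype ν ∈ renamings p := by
  have hnodup (ε : Bool) := ne_of_nodup_twoBlockWord (hp ▸ nodup_rows p ε)
  have hmem (ε : Bool) (x : X) := mem_standardWord_iff_of_map_val_rows_eq hr ε x
  refine ofSubtype_mem_renamings hr (B := T) (y := a) ?_ (fun ε b hb => ?_) ?_ hν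
  · exact hp ▸ twoBlockWord_equiv_insertAfter_right (nodup_standardWord_of_map_val_rows_eq hr)
  · rw [← hmem ε, mem_standardWord]
    have := hnodup ε
    grind
  · rw [← hmem false, mem_standardWord]
    have := hnodup false
    grind

theorem swap_mul_swap_mem_renamings {P T : WordPair X} (hp : rows p = twoBlockWord a s z P T) :
    swap a s * swap s z ∈ renamings p := by
  rw [mem_renamings_iff, hp, map_swap_mul_swap_twoBlockWord (hp ▸ nodup_rows p)]
  exact twoBlockWord_equiv_cycle a s z P T

variable {P T : WordPair X} {B : Finset X}

theorem map_val_rows_eq_of_right_block (hp : rows p = twoBlockWord a s z P T)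
    (hT : ∀ ε x, x ∈ T ε ↔ x ∈ B) {q : RPair ↥(insert a (insert z B))}
    (hq : ∀ ε x, (q ε x : ℕ) =
      ((insert a (insert z B)).filter fun y => p ε y < p ε (x : X)).card) :
    (rows q).map Subtype.val = standardWord a z T :=
  funext fun ε => calc
    (row (q ε)).map Subtype.val = (rows p ε).filter (· ∈ insert a (insert z B)) :=
      map_row_eq_filter (by simp) (hq ε)
    _ = standardWord a z T ε := by
      rw [hp, filter_twoBlockWord_right (hp ▸ nodup_rows p ε) (hT ε)]

theorem map_val_rows_eq_of_left_block (hp : rows p = twoBlockWord a s z P T)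
    (hP : ∀ ε x, x ∈ P ε ↔ x ∈ B) {r : RPair ↥(insert s (insert z B))}
    (hr : ∀ ε x, (r ε x : ℕ) = ((insert a (insert z B)).filter
      fun y => p ε y < p ε (if (x : X) = s then a else (x : X))).card) :
    (rows r).map Subtype.val = standardWord s z P := by
  have hne (ε : Bool) := ne_of_nodup_twoBlockWord (hp ▸ nodup_rows p ε)
  obtain ⟨-, haz, hsz, -⟩ := hne false
  have haB : a ∉ B := fun h => ((hne false).2.2.2.1 a ((hP false a).2 h)).1 rfl
  have hsB : s ∉ B := fun h => ((hne false).2.2.2.1 s ((hP false s).2 h)).2.1 rfl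
  let τ : ↥(insert s (insert z B)) → X := fun x => if (x : X) = s then a else x
  have hτ (x : X) : x ∈ insert a (insert z B) ↔ ∃ y, τ y = x := by
    refine ⟨fun hx => ?_, ?_⟩
    · by_cases hxa : x = a
      · exact ⟨⟨s, by simp⟩, by simp [τ, hxa]⟩
      · exact ⟨⟨x, by grind⟩, if_neg (by grind)⟩
    · rintro ⟨y, rfl⟩
      have := y.2
      grind
  have hproj : (rows r).map τ = standardWord a z P := funext fun ε => calc
    (row (r ε)).map τ = (rows p ε).filter (· ∈ insert a (insert z B)) :=
      map_row_eq_filter hτ (hr ε)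
    _ = standardWord a z P ε := by
      rw [hp, filter_twoBlockWord_left (hp ▸ nodup_rows p ε) (hP ε)]
  have hval : ((↑) : ↥(insert s (insert z B)) → X) = swap a s ∘ τ := by
    funext x
    have := x.2
    simp only [τ, Function.comp_apply]
    grind
  have hPfix : P.map (swap a s) = P := WordPair.map_eq_self fun ε x hx =>
    swap_apply_of_ne_of_ne ((hne ε).2.2.2.1 x hx).1 ((hne ε).2.2.2.1 x hx).2.1
  rw [hval, ← WordPair.map_map, hproj, map_standardWord, swap_apply_left,
    swap_apply_of_ne_of_ne haz.symm hsz.symm, hPfix]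

end StandardPairs

section ThreePoints

variable {X : Type*} [Fintype X] [DecidableEq X]

theorem eq_one_of_sign_eq_one_of_card_support_le_two {σ : Perm X} (hsign : Perm.sign σ = 1)
    (hcard : σ.support.card ≤ 2) : σ = 1 := by
  have hne : σ.support.card ≠ 2 := fun h => by
    have := (Perm.card_support_eq_two.1 h).sign_eq
    simp_all
  exact Perm.card_support_le_one.1 (by omega)

theorem mem_zpowers_of_sign_eq_one {a s z : X} (has : a ≠ s) (haz : a ≠ z) (hsz : s ≠ z)
    {σ : Perm X} (hsign : Perm.sign σ = 1)
    (hfix : ∀ x, x ≠ a → x ≠ s → x ≠ z → σ x = x) :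
    σ ∈ Subgroup.zpowers (swap a s * swap s z) := by
  set c := swap a s * swap s z
  have hcsign : Perm.sign c = 1 := by simp [c, has, hsz]
  have hca : c a = s := by simp [c, swap_apply_of_ne_of_ne has haz]
  have hcs : c s = z := by simp [c, swap_apply_of_ne_of_ne haz.symm hsz.symm]
  have hcfix (x : X) (hxa : x ≠ a) (hxs : x ≠ s) (hxz : x ≠ z) : c x = x := by
    simp [c, swap_apply_of_ne_of_ne, *]
  have hσa : σ a = a ∨ σ a = s ∨ σ a = z := by
    by_contra! h
    exact h.1 (σ.injective (hfix _ h.1 h.2.1 h.2.2))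
  obtain ⟨i, hi⟩ : ∃ i : ℕ, (c ^ i) a = σ a := by
    rcases hσa with h | h | h
    exacts [⟨0, h.symm⟩, ⟨1, by simp [h, hca]⟩, ⟨2, by simp [h, pow_two, hca, hcs]⟩]
  have hcard : ((c ^ i)⁻¹ * σ).support.card ≤ 2 := by
    refine (Finset.card_le_card fun x hx => ?_).trans (Finset.card_le_two (a := s) (b := z))
    contrapose! hx
    simp only [Finset.mem_insert, Finset.mem_singleton, not_or] at hx
    rw [Perm.notMem_support, Perm.mul_apply, Perm.inv_eq_iff_eq]
    by_cases hxa : x = a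
    · exact hxa ▸ hi.symm
    · rw [hfix x hxa hx.1 hx.2, Perm.pow_apply_eq_self_of_apply_eq_self (hcfix x hxa hx.1 hx.2)]
  have hone := eq_one_of_sign_eq_one_of_card_support_le_two (by simp [hsign, hcsign]) hcard
  rw [inv_mul_eq_one] at hone
  exact hone ▸ Subgroup.npow_mem_zpowers c i

end ThreePoints

/-- for a standard irreducible pair composed of two blocks `B₁`, `B₂`
separated by a letter `s` (with `a = π₀⁻¹(1)`, `z = π₁⁻¹(1)`), the projections `q`
(onto `{a} ∪ B₂ ∪ {z}`) and `r` (onto `{s} ∪ B₁ ∪ {z}`, via `τ : s ↦ a`) are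
irreducible, and the subgroup generated by the identity-extensions of `G(q)` and
`G(r)` together with the even permutations supported on `{a,s,z}` is contained in
`G(π)`.  Positions are 0-indexed: 1-based `2 ≤ π_ε(b) ≤ k` reads `1 ≤ ⬝ ≤ k−1`,
1-based `k+2 ≤ π_ε(b) ≤ N−1` reads `k+1 ≤ ⬝ ≤ N−2`, and the 1-based projection
count `#{c ∈ A' : π_ε(c) ≤ π_ε(b)}` reads `#{c ∈ A' : π_ε(c) < π_ε(b)}`. -/
theorem stmt13 {A : Type*} [Fintype A] [DecidableEq A] [Nonempty A]
    (π : RPair A) (hπ : PairIrreducible π) (hstd : PairStandard π)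
    (a s z : A) (k : ℕ)
    (ha : (π false a : ℕ) = 0) (hz : (π true z : ℕ) = 0)
    (hk1 : 1 < k) (hk2 : k < Fintype.card A - 1)
    (hs0 : (π false s : ℕ) = k) (hs1 : (π true s : ℕ) = k)
    (B1 B2 : Finset A)
    (hB1 : ∀ x : A, x ∈ B1 ↔ 1 ≤ (π false x : ℕ) ∧ (π false x : ℕ) ≤ k - 1)
    (hB1' : ∀ x : A, x ∈ B1 ↔ 1 ≤ (π true x : ℕ) ∧ (π true x : ℕ) ≤ k - 1)
    (hB2 : ∀ x : A,
      x ∈ B2 ↔ k + 1 ≤ (π false x : ℕ) ∧ (π false x : ℕ) ≤ Fintype.card A - 2)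
    (hB2' : ∀ x : A,
      x ∈ B2 ↔ k + 1 ≤ (π true x : ℕ) ∧ (π true x : ℕ) ≤ Fintype.card A - 2)
    (q : RPair ↥(insert a (insert z B2)))
    (hq : ∀ (ε : Bool) (x : ↥(insert a (insert z B2))),
      ((q ε) x : ℕ) = ((insert a (insert z B2)).filter fun y => π ε y < π ε (x : A)).card)
    (r : RPair ↥(insert s (insert z B1)))
    (hr : ∀ (ε : Bool) (x : ↥(insert s (insert z B1))),
      ((r ε) x : ℕ) =
        ((insert a (insert z B1)).filter
          fun y => π ε y < π ε (if (x : A) = s then a else (x : A))).card) :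
    PairIrreducible q ∧ PairIrreducible r ∧
      (Subgroup.closure
          ((fun σ : Equiv.Perm ↥(insert a (insert z B2)) =>
              Equiv.Perm.ofSubtype σ) '' renamings q ∪
           (fun σ : Equiv.Perm ↥(insert s (insert z B1)) =>
              Equiv.Perm.ofSubtype σ) '' renamings r ∪
           {σ : Equiv.Perm A | σ ∈ alternatingGroup A ∧
              ∀ x : A, x ≠ a → x ≠ s → x ≠ z → σ x = x}) :
        Set (Equiv.Perm A)) ⊆ renamings π := by
  obtain ⟨P, T, hp, hP, hT⟩ := exists_rows_eq_twoBlockWord ha (hstd.coe_true_eq ha)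
    (hstd.coe_false_eq hz) hz (Bool.forall_bool.2 ⟨hs0, hs1⟩) (by omega) hk2
    (Bool.forall_bool.2 ⟨hB1, hB1'⟩) (Bool.forall_bool.2 ⟨hB2, hB2'⟩)
  have hq' : (rows q).map Subtype.val = standardWord a z T :=
    map_val_rows_eq_of_right_block hp hT hq
  have hr' : (rows r).map Subtype.val = standardWord s z P :=
    map_val_rows_eq_of_left_block hp hP hr
  obtain ⟨has, haz, hsz, -⟩ := ne_of_nodup_twoBlockWord (hp ▸ nodup_rows π false)
  refine ⟨pairIrreducible_of_map_rows_eq Subtype.val_injective hq',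
    pairIrreducible_of_map_rows_eq Subtype.val_injective hr',
    (Subgroup.closure_le (renamingGroup π)).2 ?_⟩
  rintro _ ((⟨ν, hν, rfl⟩ | ⟨ν, hν, rfl⟩) | ⟨hsign, hfix⟩)
  · exact ofSubtype_mem_renamings_of_right_block hp hq' hν
  · exact ofSubtype_mem_renamings_of_left_block hp hr' hν
  · exact (Subgroup.zpowers_le (H := renamingGroup π)).2 (swap_mul_swap_mem_renamings hp)
      (mem_zpowers_of_sign_eq_one has haz hsz (Perm.mem_alternatingGroup.1 hsign) hfix)
end

section
/- Let N ≥ 2 and let ν₁ = (1,2,…,N−1) and ν₂ = (2,3,…,N) be cyclic permutations in the symmetric group Sym({1,…,N}). Then the subgroup generated by ν₁ and ν₂ equals the alternating group Alt({1,…,N}) if N is even, and equals the full symmetric group Sym({1,…,N}) if N is odd. -/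
/-!
Rotating the second cycle turns the two generators into `(x, y, …)` and `(z, y, …)`, two cycles
that differ in one letter only. Their quotient `(x y)(z y)` is a 3-cycle. The first cycle fixes `z`
and is transitive on all other points, while the second moves `z`, so the group they generate is
2-transitive, hence primitive, and by Jordan's theorem it contains the alternating group. Which of
the two groups it is can then be read off from the sign of the generators.
-/

open Equiv Equiv.Perm MulAction

theorem isCoatom_of_index_prime {G : Type*} [Group G] {K : Subgroup G} (hK : K.index.Prime) :
    IsCoatom K := by
  refine ⟨fun htop ↦ hK.ne_one (Subgroup.index_eq_one.2 htop), fun H hKH ↦ ?_⟩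
  have hmul : K.relIndex H * H.index = K.index := Subgroup.relIndex_mul_index hKH.le
  rcases (Nat.dvd_prime hK).1 (Dvd.intro_left _ hmul) with hone | hindex
  · exact Subgroup.index_eq_one.1 hone
  · rw [hindex, Nat.mul_eq_right hK.ne_zero] at hmul
    exact absurd (Subgroup.relIndex_eq_one.1 hmul) hKH.not_ge

theorem exists_eq_cons_concat {α : Type*} {l : List α} (hlength : 2 ≤ l.length) :
    ∃ x m z, l = x :: (m ++ [z]) := by
  obtain ⟨x, t, rfl⟩ := List.exists_cons_of_length_pos (by lia : 0 < l.length)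
  obtain ⟨m, z, rfl⟩ := (List.eq_nil_or_concat' t).resolve_left (by rintro rfl; simp at hlength)
  exact ⟨x, m, z, rfl⟩

section Transitivity

variable {α : Type*} {G : Subgroup (Perm α)} {σ g : Perm α} {z : α}

theorem exists_mem_apply_eq_of_isCycle (hσG : σ ∈ G) (hσ : σ.IsCycle)
    (hfix : ∀ a, σ a = a ↔ a = z) {a b : α} (ha : a ≠ z) (hb : b ≠ z) :
    ∃ τ ∈ G, τ z = z ∧ τ a = b := by
  obtain ⟨i, hi⟩ := hσ.exists_zpow_eq (mt (hfix a).1 ha) (mt (hfix b).1 hb)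
  exact ⟨σ ^ i, zpow_mem hσG i, zpow_apply_eq_self_of_apply_eq_self ((hfix z).2 rfl) i, hi⟩

theorem isPretransitive_of_isCycle (hσG : σ ∈ G) (hσ : σ.IsCycle)
    (hfix : ∀ a, σ a = a ↔ a = z) (hgG : g ∈ G) (hgz : g z ≠ z) : IsPretransitive G α := by
  refine (isPretransitive_iff_base z).2 fun b ↦ ?_
  by_cases hb : b = z
  · exact ⟨1, by rw [one_smul, hb]⟩
  · obtain ⟨τ, hτG, -, hτ⟩ := exists_mem_apply_eq_of_isCycle hσG hσ hfix hgz hb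
    exact ⟨⟨τ * g, mul_mem hτG hgG⟩, hτ⟩

theorem isMultiplyPretransitive_two_of_isCycle (hσG : σ ∈ G) (hσ : σ.IsCycle)
    (hfix : ∀ a, σ a = a ↔ a = z) (hgG : g ∈ G) (hgz : g z ≠ z) :
    IsMultiplyPretransitive G α 2 := by
  have := isPretransitive_of_isCycle hσG hσ hfix hgG hgz
  rw [SubMulAction.ofStabilizer.isMultiplyPretransitive (a := z), is_one_pretransitive_iff]
  refine ⟨fun ⟨a, ha⟩ ⟨b, hb⟩ ↦ ?_⟩
  obtain ⟨τ, hτG, hτz, hτ⟩ := exists_mem_apply_eq_of_isCycle hσG hσ hfix ha hb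
  exact ⟨⟨⟨τ, hτG⟩, hτz⟩, Subtype.ext hτ⟩

end Transitivity

section FormPerm

variable {α : Type*} [DecidableEq α]

theorem formPerm_concat {l : List α} {z : α} (h : (z :: l).Nodup) :
    (l ++ [z]).formPerm = (z :: l).formPerm := by
  rw [← List.formPerm_rotate_one _ h, List.rotate_cons_succ, List.rotate_zero]

theorem formPerm_apply_eq_self_iff_notMem {l : List α} (hnodup : l.Nodup) (hlength : 2 ≤ l.length)
    (a : α) : l.formPerm a = a ↔ a ∉ l :=
  ⟨fun hfix hmem ↦ (List.formPerm_apply_mem_ne_self_iff l hnodup a hmem).2 hlength hfix,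
    List.formPerm_apply_of_notMem⟩

section Fintype

variable [Fintype α]

theorem sign_formPerm_cons {x : α} {l : List α} (h : (x :: l).Nodup) :
    sign (x :: l).formPerm = (-1) ^ l.length := by
  induction l generalizing x with
  | nil => simp
  | cons y l ih =>
    have hxy : x ≠ y := List.ne_of_not_mem_cons h.notMem
    rw [List.formPerm_cons_cons, Perm.sign_mul, sign_swap hxy, ih h.of_cons,
      List.length_cons, pow_succ']

theorem isThreeCycle_formPerm_mul_inv {x y z : α} (l : List α) (hxy : x ≠ y) (hzy : z ≠ y)
    (hxz : x ≠ z) :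
    IsThreeCycle ((x :: y :: l).formPerm * (z :: y :: l).formPerm⁻¹) := by
  have hswap : (x :: y :: l).formPerm * (z :: y :: l).formPerm⁻¹ = swap y x * swap y z := by
    rw [List.formPerm_cons_cons, List.formPerm_cons_cons, mul_inv_rev, mul_assoc,
      mul_inv_cancel_left, swap_inv, swap_comm x, swap_comm z]
  rw [hswap]
  exact isThreeCycle_swap_mul_swap_same hxy.symm hzy.symm hxz

theorem alternatingGroup_le_closure_formPerm_cons {x z : α} {l : List α}
    (hnodup : (x :: z :: l).Nodup) (hmem : ∀ a, a ∈ x :: z :: l) :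
    alternatingGroup α ≤ Subgroup.closure {(x :: l).formPerm, (z :: l).formPerm} := by
  rcases l with - | ⟨y, l⟩
  · have hcard : Nat.card α ≤ 2 := by
      rw [Nat.card_eq_fintype_card]
      exact (Finset.card_le_card fun a _ ↦ List.mem_toFinset.2 (hmem a)).trans
        (List.toFinset_card_le [x, z])
    exact (alternatingGroup.eq_bot_of_card_le_two hcard).trans_le bot_le
  · set H := Subgroup.closure {(x :: y :: l).formPerm, (z :: y :: l).formPerm}
    have hx : (x :: y :: l).formPerm ∈ H := Subgroup.subset_closure (Set.mem_insert _ _)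
    have hz : (z :: y :: l).formPerm ∈ H := Subgroup.subset_closure (Set.mem_insert_of_mem _ rfl)
    have hxnodup : (x :: y :: l).Nodup := by grind
    have hcycle : (x :: y :: l).formPerm.IsCycle := List.isCycle_formPerm hxnodup (by simp)
    have hfix (a : α) : (x :: y :: l).formPerm a = a ↔ a = z := by
      rw [formPerm_apply_eq_self_iff_notMem hxnodup (by simp)]
      grind
    have hmoves : (z :: y :: l).formPerm z ≠ z := by
      rw [List.formPerm_apply_head z y l hnodup.of_cons]
      grind
    have hprim : IsPreprimitive H α := isPreprimitive_of_is_two_pretransitive <|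
      isMultiplyPretransitive_two_of_isCycle hx hcycle hfix hz hmoves
    exact alternatingGroup_le_of_isPreprimitive_of_isThreeCycle_mem hprim
      (isThreeCycle_formPerm_mul_inv l (by grind) (by grind) (by grind)) (mul_mem hx (inv_mem hz))

theorem closure_formPerm_cons_eq_alternatingGroup {x z : α} {l : List α}
    (hnodup : (x :: z :: l).Nodup) (hmem : ∀ a, a ∈ x :: z :: l) (heven : Even l.length) :
    Subgroup.closure {(x :: l).formPerm, (z :: l).formPerm} = alternatingGroup α := by
  have hxnodup : (x :: l).Nodup := by grind
  refine le_antisymm ((Subgroup.closure_le _).2 ?_)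
    (alternatingGroup_le_closure_formPerm_cons hnodup hmem)
  rintro _ (rfl | rfl)
  · exact (sign_formPerm_cons hxnodup).trans heven.neg_one_pow
  · exact (sign_formPerm_cons hnodup.of_cons).trans heven.neg_one_pow

end Fintype

theorem closure_formPerm_cons_eq_top {x z : α} {l : List α}
    (hnodup : (x :: z :: l).Nodup) (hmem : ∀ a, a ∈ x :: z :: l) (hodd : Odd l.length) :
    Subgroup.closure {(x :: l).formPerm, (z :: l).formPerm} = ⊤ := by
  have : Fintype α := Fintype.ofList _ hmem
  have : Nontrivial α := ⟨x, z, by grind⟩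
  have hxnodup : (x :: l).Nodup := by grind
  have hcoatom : IsCoatom (alternatingGroup α) :=
    isCoatom_of_index_prime (alternatingGroup.index_eq_two (α := α) ▸ Nat.prime_two)
  have hx : (x :: l).formPerm ∉ alternatingGroup α := by
    rw [mem_alternatingGroup, sign_formPerm_cons hxnodup, hodd.neg_one_pow]
    decide
  exact hcoatom.2 _ <| (alternatingGroup_le_closure_formPerm_cons hnodup hmem).lt_of_not_ge
    fun hge ↦ hx (hge (Subgroup.subset_closure (Set.mem_insert _ _)))

theorem stmt14_general [Fintype α] {l : List α} (hnodup : l.Nodup) (hmem : ∀ a, a ∈ l)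
    (hlength : 2 ≤ l.length) :
    (Even l.length →
      Subgroup.closure {l.dropLast.formPerm, l.tail.formPerm} = alternatingGroup α) ∧
    (Odd l.length → Subgroup.closure {l.dropLast.formPerm, l.tail.formPerm} = ⊤) := by
  obtain ⟨x, m, z, rfl⟩ := exists_eq_cons_concat hlength
  have hperm : (x :: (m ++ [z])).Perm (x :: z :: m) := (List.perm_append_singleton z m).cons x
  have hnodup' : (x :: z :: m).Nodup := hperm.nodup hnodup
  have hmem' (a : α) : a ∈ x :: z :: m := hperm.mem_iff.1 (hmem a)
  have hdropLast : (x :: (m ++ [z])).dropLast = x :: m := by grind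
  have hlength_eq : (x :: (m ++ [z])).length = m.length + 2 := by simp
  rw [hdropLast, List.tail_cons, formPerm_concat hnodup'.of_cons, hlength_eq]
  refine ⟨fun heven ↦ closure_formPerm_cons_eq_alternatingGroup hnodup' hmem' ?_,
    fun hodd ↦ closure_formPerm_cons_eq_top hnodup' hmem' ?_⟩
  · simpa [parity_simps] using heven
  · simpa [parity_simps] using hodd

end FormPerm

/-- in `Sym({1,…,N})` (modeled as `Equiv.Perm (Fin N)`, 0-indexed),
the cycles `ν₁ = (1,2,…,N−1)` and `ν₂ = (2,3,…,N)` generate `Alt` if `N` is even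
and `Sym` if `N` is odd. -/
theorem stmt14 (N : ℕ) (hN : 2 ≤ N) :
    (Even N →
      Subgroup.closure
          {((List.finRange N).take (N - 1)).formPerm,
           ((List.finRange N).drop 1).formPerm} = alternatingGroup (Fin N)) ∧
    (Odd N →
      Subgroup.closure
          {((List.finRange N).take (N - 1)).formPerm,
           ((List.finRange N).drop 1).formPerm} = (⊤ : Subgroup (Equiv.Perm (Fin N)))) := by
  simpa [List.dropLast_eq_take] using
    stmt14_general (List.nodup_finRange N) List.mem_finRange (by simpa using hN)
end

section
/- Let N be odd and let ν₁ = (1,2,…,N) and ν₂ = (1,2) in Sym({1,…,N}). Then the subgroup generated by ν₁ and ν₂ν₁ν₂ equals the alternating group Alt({1,…,N}). -/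
/-!
Write `c` for the full cycle, `s` for the transposition and `H` for the subgroup generated by `c`
and `s c s`. Conjugation by `s` swaps the two generators of `H`, and `c ∈ H`, so `H` is normalized
by `⟨c, s⟩`, which is the whole symmetric group. Moreover `s c s c⁻¹` is the product of `s` with
the adjacent transposition `c s c⁻¹`, a three-cycle. A normal subgroup of the symmetric group that
contains one three-cycle contains them all, hence contains the alternating group. Conversely, a
full cycle on an odd number of points is even.
-/

open Equiv Equiv.Perm Subgroup

theorem mem_normalizer_closure_pair_conj {G : Type*} [Group G] {s : G} (hs : s * s = 1) (x : G) :
    s ∈ normalizer (closure {x, s * x * s} : Set G) := by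
  have hinv : s⁻¹ = s := inv_eq_of_mul_eq_one_left hs
  have hconj : s * (s * x * s) * s = x := by
    rw [mul_assoc s x s, ← mul_assoc s s, hs, one_mul, mul_assoc, hs, mul_one]
  apply normalizer_le_normalizer_closure
  rw [mem_normalizer_iff_conj_image_eq, Set.image_pair, MulAut.conj_apply, MulAut.conj_apply,
    hinv, hconj, Set.pair_comm]

theorem normal_closure_pair_conj {G : Type*} [Group G] {s x : G} (hs : s * s = 1)
    (hgen : closure {x, s} = ⊤) : (closure {x, s * x * s}).Normal := by
  rw [← normalizer_eq_top_iff, eq_top_iff, ← hgen, closure_le, Set.pair_subset_iff]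
  exact ⟨le_normalizer (subset_closure (Set.mem_insert _ _)),
    mem_normalizer_closure_pair_conj hs x⟩

theorem finRange_formPerm_eq_finRotate (n : ℕ) : (List.finRange n).formPerm = finRotate n := by
  ext i
  have hi : i.val < (List.finRange n).length := by simp
  have h := List.formPerm_apply_getElem _ (List.nodup_finRange n) i hi
  have := i.neZero
  simp only [List.getElem_finRange, List.length_finRange, Fin.cast_mk, Fin.eta] at h
  simp [h, finRotate_apply, Fin.val_add]

theorem finRotate_mk_zero_of_le {n : ℕ} (h : 2 ≤ n) :
    finRotate n ⟨0, two_pos.trans_le h⟩ = ⟨1, one_lt_two.trans_le h⟩ := by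
  obtain ⟨m, rfl⟩ := Nat.exists_eq_add_of_le' h
  exact finRotate_of_lt m.succ_pos

section Perm

variable {α : Type*} [Fintype α] [DecidableEq α]

theorem alternatingGroup_le_of_normal_of_isThreeCycle_mem {H : Subgroup (Perm α)} [H.Normal]
    {t : Perm α} (ht : t.IsThreeCycle) (htH : t ∈ H) : alternatingGroup α ≤ H := by
  rw [← closure_three_cycles_eq_alternating, closure_le]
  intro u (hu : u.IsThreeCycle)
  have hconj : IsConj t u := isConj_iff_cycleType_eq.2 (ht.trans hu.symm)
  obtain ⟨g, rfl⟩ := isConj_iff.1 hconj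
  exact Normal.conj_mem ‹_› t htH g

theorem isThreeCycle_swap_mul_mul_swap_mul_inv {c : Perm α} {a : α} (h₁ : c a ≠ a)
    (h₂ : c (c a) ≠ a) :
    (swap a (c a) * c * swap a (c a) * c⁻¹).IsThreeCycle := by
  have hprod : swap a (c a) * c * swap a (c a) * c⁻¹ = swap (c a) a * swap (c a) (c (c a)) := by
    rw [swap_apply_apply c a (c a), swap_comm (c a) a]
    simp only [mul_assoc]
  rw [hprod]
  exact isThreeCycle_swap_mul_swap_same h₁ (c.injective.ne h₁.symm) h₂.symm

variable {c : Perm α}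

theorem alternatingGroup_le_closure_isCycle_pair (hc : c.IsCycle) (hsupp : c.support = Finset.univ)
    {a : α} (h₂ : c (c a) ≠ a) :
    alternatingGroup α ≤ closure {c, swap a (c a) * c * swap a (c a)} := by
  have hnormal : (closure {c, swap a (c a) * c * swap a (c a)}).Normal :=
    normal_closure_pair_conj (swap_mul_self _ _) (closure_cycle_adjacent_swap hc hsupp a)
  have h₁ : c a ≠ a := mem_support.1 (hsupp ▸ Finset.mem_univ a)
  exact alternatingGroup_le_of_normal_of_isThreeCycle_mem
    (isThreeCycle_swap_mul_mul_swap_mul_inv h₁ h₂)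
    (mul_mem (subset_closure (by simp)) (inv_mem (subset_closure (by simp))))

theorem sign_eq_one_of_isCycle_of_odd_card_support (hc : c.IsCycle) (hodd : Odd c.support.card) :
    sign c = 1 := by
  rw [hc.sign, hodd.neg_one_pow, neg_neg]

theorem apply_apply_ne_of_isCycle_of_odd_card_support (hc : c.IsCycle)
    (hodd : Odd c.support.card) {a : α} (ha : c a ≠ a) : c (c a) ≠ a := by
  intro h
  have hsq : c ^ 2 = 1 := (hc.pow_eq_one_iff' ha).2 h
  have hle : c.support.card ≤ 2 := hc.orderOf ▸ orderOf_le_of_pow_eq_one two_pos hsq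
  have htwo : c.support.card = 2 := hle.antisymm hc.two_le_card_support
  exact Nat.not_odd_iff_even.2 even_two (htwo ▸ hodd)

theorem stmt15_general (hc : c.IsCycle) (hsupp : c.support = Finset.univ)
    (hodd : Odd (Fintype.card α)) (a : α) :
    closure {c, swap a (c a) * c * swap a (c a)} = alternatingGroup α := by
  have hodd' : Odd c.support.card := by rwa [hsupp, Finset.card_univ]
  have hsign : sign c = 1 := sign_eq_one_of_isCycle_of_odd_card_support hc hodd'
  have ha : c a ≠ a := mem_support.1 (hsupp ▸ Finset.mem_univ a)
  refine le_antisymm ?_ (alternatingGroup_le_closure_isCycle_pair hc hsupp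
    (apply_apply_ne_of_isCycle_of_odd_card_support hc hodd' ha))
  rw [closure_le, Set.pair_subset_iff]
  simp [mem_alternatingGroup, hsign, sign_swap ha.symm]

end Perm

/-- for odd `N`, with `ν₁ = (1,2,…,N)` and `ν₂ = (1,2)` in
`Sym({1,…,N})` (modeled as `Equiv.Perm (Fin N)`, 0-indexed), the subgroup
generated by `ν₁` and `ν₂ν₁ν₂` is the alternating group. -/
theorem stmt15 (N : ℕ) (hN : 2 ≤ N) (hodd : Odd N) :
    Subgroup.closure
        {(List.finRange N).formPerm,
         Equiv.swap (⟨0, by omega⟩ : Fin N) ⟨1, by omega⟩ *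
           (List.finRange N).formPerm *
           Equiv.swap (⟨0, by omega⟩ : Fin N) ⟨1, by omega⟩} =
      alternatingGroup (Fin N) := by
  simpa only [finRange_formPerm_eq_finRotate, finRotate_mk_zero_of_le hN] using
    stmt15_general (isCycle_finRotate_of_le hN) (support_finRotate_of_le hN)
      (by simpa only [Fintype.card_fin] using hodd) ⟨0, by omega⟩
end

section
/- Let B and C be finite sets, each with at least 3 elements, with B ∩ C ≠ ∅, and let A = B ∪ C. Identifying Sym(B) and Sym(C) with the subgroups of Sym(A) consisting of the permutations fixing A ∖ B (respectively A ∖ C) pointwise, one has: the subgroup of Sym(A) generated by Alt(B) and Alt(C) equals Alt(A), and the subgroup of Sym(A) generated by Alt(B) and Sym(C) equals Sym(A). -/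
/-!
A block of imprimitivity that has two points and meets `S` contains `S`, as soon as `Alt(S)` acts
and `S` has at least three points: move two points of the block by a suitable 3-cycle. Since `B`
and `C` overlap and cover everything, a group containing `Alt(B)` and `Alt(C)` has only trivial
blocks. So it is primitive, and Jordan's theorems on primitive groups containing a 3-cycle or a
transposition apply.
-/

section

open Equiv Equiv.Perm MulAction
open scoped Pointwise

variable {α : Type*}

theorem smul_mem_of_isBlock {G : Type*} [Group G] [MulAction G α] {X : Set α} (hX : IsBlock G X)
    {g : G} {x y : α} (hx : x ∈ X) (hgx : g • x ∈ X) (hy : y ∈ X) : g • y ∈ X := by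
  have hfix : g • X = X := isBlock_iff_smul_eq_of_mem.1 hX hx hgx
  exact hfix ▸ Set.smul_mem_smul_set hy

theorem exists_mem_ne_ne_of_three_le_card {S : Finset α} (hS : 3 ≤ S.card) (x y : α) :
    ∃ z ∈ S, z ≠ x ∧ z ≠ y := by
  classical
  have hlt : ({x, y} : Finset α).card < S.card := Finset.card_le_two.trans_lt hS
  simpa using Finset.exists_mem_notMem_of_card_lt_card hlt

/-- `Sym(S)`, as the subgroup of permutations of `α` fixing every point outside `S`. -/
def symOn (S : Finset α) : Subgroup (Perm α) :=
  fixingSubgroup (Perm α) (S : Set α)ᶜ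

theorem mem_symOn {S : Finset α} {σ : Perm α} : σ ∈ symOn S ↔ ∀ x ∉ S, σ x = x := by
  simp [symOn, mem_fixingSubgroup_iff]

variable [DecidableEq α]

theorem swap_mem_symOn {S : Finset α} {x y : α} (hx : x ∈ S) (hy : y ∈ S) :
    swap x y ∈ symOn S :=
  mem_symOn.2 fun _ hz ↦
    swap_apply_of_ne_of_ne (ne_of_mem_of_not_mem hx hz).symm (ne_of_mem_of_not_mem hy hz).symm

variable [Fintype α]

/-- `Alt(S)`, as the subgroup of even permutations of `α` fixing every point outside `S`; extending
a permutation of `S` by the identity preserves its sign, so parity may be read off in `α`. -/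
def altOn (S : Finset α) : Subgroup (Perm α) :=
  symOn S ⊓ alternatingGroup α

theorem mem_altOn {S : Finset α} {σ : Perm α} :
    σ ∈ altOn S ↔ (∀ x ∉ S, σ x = x) ∧ σ ∈ alternatingGroup α := by
  rw [altOn, Subgroup.mem_inf, mem_symOn]

theorem swap_mul_swap_mem_altOn {S : Finset α} {x y z : α} (hx : x ∈ S) (hy : y ∈ S) (hz : z ∈ S)
    (hxy : x ≠ y) (hxz : x ≠ z) : swap x y * swap x z ∈ altOn S :=
  ⟨mul_mem (swap_mem_symOn hx hy) (swap_mem_symOn hx hz),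
    Perm.mem_alternatingGroup.2 (by simp [sign_swap hxy, sign_swap hxz])⟩

theorem exists_isThreeCycle_mem_altOn {S : Finset α} (hS : 3 ≤ S.card) :
    ∃ σ ∈ altOn S, σ.IsThreeCycle := by
  obtain ⟨x, hx, y, hy, z, hz, hxy, hxz, hyz⟩ := Finset.two_lt_card.1 hS
  exact ⟨_, swap_mul_swap_mem_altOn hx hy hz hxy hxz, isThreeCycle_swap_mul_swap_same hxy hxz hyz⟩

section Blocks

variable {H : Subgroup (Perm α)} {S B C : Finset α}

theorem subset_of_isBlock_of_altOn_le (hS : 3 ≤ S.card) (hH : altOn S ≤ H) {X : Set α}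
    (hX : IsBlock H X) (hX₂ : X.Nontrivial) (hXS : (X ∩ S).Nonempty) : (S : Set α) ⊆ X := by
  intro y hyS
  obtain ⟨x, hxX, hxS⟩ := hXS
  obtain rfl | hxy := eq_or_ne x y
  · exact hxX
  obtain ⟨x', hx'X, hx'x⟩ := hX₂.exists_ne x
  by_cases hx'S : x' ∈ S
  · obtain rfl | hx'y := eq_or_ne x' y
    · exact hx'X
    let g : H := ⟨swap x y * swap x x', hH (swap_mul_swap_mem_altOn hxS hyS hx'S hxy hx'x.symm)⟩
    have hgx : g • x = x' := by
      simp [g, Subgroup.smul_def, swap_apply_of_ne_of_ne hx'x hx'y]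
    have hgx' : g • x' = y := by simp [g, Subgroup.smul_def]
    exact hgx' ▸ smul_mem_of_isBlock hX hxX (hgx.symm ▸ hx'X) hx'X
  · obtain ⟨z, hzS, hzx, hzy⟩ := exists_mem_ne_ne_of_three_le_card hS x y
    have hσS : swap x z * swap x y ∈ altOn S := swap_mul_swap_mem_altOn hxS hzS hyS hzx.symm hxy
    let g : H := ⟨swap x z * swap x y, hH hσS⟩
    have hgx : g • x = y := by
      simp [g, Subgroup.smul_def, swap_apply_of_ne_of_ne hxy.symm hzy.symm]
    have hgx' : g • x' = x' := (mem_altOn.1 hσS).1 x' hx'S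
    exact hgx ▸ smul_mem_of_isBlock hX hx'X (hgx'.symm ▸ hx'X) hxX

theorem eq_univ_of_isBlock_of_altOn_le (hB : 3 ≤ B.card) (hC : 3 ≤ C.card)
    (hBC : (B ∩ C).Nonempty) (hcover : B ∪ C = Finset.univ) (hHB : altOn B ≤ H)
    (hHC : altOn C ≤ H) {X : Set α} (hX : IsBlock H X) (hX₂ : X.Nontrivial) : X = Set.univ := by
  obtain ⟨c, hc⟩ := hBC
  obtain ⟨hcB, hcC⟩ := Finset.mem_inter.1 hc
  have hB_of_meets := subset_of_isBlock_of_altOn_le hB hHB hX hX₂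
  have hC_of_meets := subset_of_isBlock_of_altOn_le hC hHC hX hX₂
  have hcX : c ∈ X := by
    obtain ⟨x, hx⟩ := hX₂.nonempty
    rcases Finset.mem_union.1 (hcover ▸ Finset.mem_univ x) with hxB | hxC
    · exact hB_of_meets ⟨x, hx, hxB⟩ hcB
    · exact hC_of_meets ⟨x, hx, hxC⟩ hcC
  refine Set.eq_univ_of_forall fun y ↦ ?_
  rcases Finset.mem_union.1 (hcover ▸ Finset.mem_univ y) with hyB | hyC
  · exact hB_of_meets ⟨c, hcX, hcB⟩ hyB
  · exact hC_of_meets ⟨c, hcX, hcC⟩ hyC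

theorem isPreprimitive_of_altOn_le (hB : 3 ≤ B.card) (hC : 3 ≤ C.card)
    (hBC : (B ∩ C).Nonempty) (hcover : B ∪ C = Finset.univ) (hHB : altOn B ≤ H)
    (hHC : altOn C ≤ H) : IsPreprimitive H α := by
  refine IsPreprimitive.mk' (fun hfixed ↦ ?_) fun {X} hX ↦ ?_
  · obtain ⟨σ, hσ, hσ₃⟩ := exists_isThreeCycle_mem_altOn hB
    refine hσ₃.ne_one (Perm.ext fun x ↦ ?_)
    have hx : x ∈ fixedPoints H α := hfixed ▸ Set.mem_univ x
    exact hx ⟨σ, hHB hσ⟩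
  · exact X.subsingleton_or_nontrivial.imp_right
      (eq_univ_of_isBlock_of_altOn_le hB hC hBC hcover hHB hHC hX)

end Blocks

section Generation

variable {B C : Finset α}

theorem altOn_sup_altOn_eq_alternatingGroup (hB : 3 ≤ B.card) (hC : 3 ≤ C.card)
    (hBC : (B ∩ C).Nonempty) (hcover : B ∪ C = Finset.univ) :
    altOn B ⊔ altOn C = alternatingGroup α := by
  refine le_antisymm (sup_le inf_le_right inf_le_right) ?_
  obtain ⟨σ, hσ, hσ₃⟩ := exists_isThreeCycle_mem_altOn hB
  exact alternatingGroup_le_of_isPreprimitive_of_isThreeCycle_mem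
    (isPreprimitive_of_altOn_le hB hC hBC hcover le_sup_left le_sup_right) hσ₃
    (Subgroup.mem_sup_left hσ)

theorem altOn_sup_symOn_eq_top (hB : 3 ≤ B.card) (hC : 3 ≤ C.card)
    (hBC : (B ∩ C).Nonempty) (hcover : B ∪ C = Finset.univ) :
    altOn B ⊔ symOn C = ⊤ := by
  have hprim : IsPreprimitive (altOn B ⊔ symOn C : Subgroup (Perm α)) α :=
    isPreprimitive_of_altOn_le hB hC hBC hcover le_sup_left (inf_le_left.trans le_sup_right)
  obtain ⟨x, hx, y, hy, hxy⟩ := Finset.one_lt_card.1 (Nat.lt_of_succ_lt hC)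
  exact subgroup_eq_top_of_isPreprimitive_of_isSwap_mem hprim (swap x y) ⟨x, y, hxy, rfl⟩
    (Subgroup.mem_sup_right (swap_mem_symOn hx hy))

end Generation

end

/-- if `B`, `C` are finite sets with at least 3 elements each,
`B ∩ C ≠ ∅` and `A = B ∪ C`, then (identifying a permutation of a subset with
its extension by the identity, i.e. with the permutations of `A` fixing the
complement pointwise) `⟨Alt(B), Alt(C)⟩ = Alt(A)` and `⟨Alt(B), Sym(C)⟩ = Sym(A)`. -/
theorem stmt16 {α : Type*} [Fintype α] [DecidableEq α]
    (B C : Finset α) (hB : 3 ≤ B.card) (hC : 3 ≤ C.card)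
    (hBC : (B ∩ C).Nonempty) (hcover : B ∪ C = Finset.univ) :
    Subgroup.closure
        ({σ : Equiv.Perm α | (∀ x ∉ B, σ x = x) ∧ σ ∈ alternatingGroup α} ∪
         {σ : Equiv.Perm α | (∀ x ∉ C, σ x = x) ∧ σ ∈ alternatingGroup α}) =
      alternatingGroup α ∧
    Subgroup.closure
        ({σ : Equiv.Perm α | (∀ x ∉ B, σ x = x) ∧ σ ∈ alternatingGroup α} ∪
         {σ : Equiv.Perm α | ∀ x ∉ C, σ x = x}) =
      (⊤ : Subgroup (Equiv.Perm α)) := by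
  have halt (S : Finset α) :
      {σ : Equiv.Perm α | (∀ x ∉ S, σ x = x) ∧ σ ∈ alternatingGroup α} = altOn S :=
    Set.ext fun _ ↦ mem_altOn.symm
  have hsym : {σ : Equiv.Perm α | ∀ x ∉ C, σ x = x} = symOn C :=
    Set.ext fun _ ↦ mem_symOn.symm
  rw [halt B, halt C, hsym, ← Subgroup.sup_eq_closure, ← Subgroup.sup_eq_closure]
  exact ⟨altOn_sup_altOn_eq_alternatingGroup hB hC hBC hcover,
    altOn_sup_symOn_eq_top hB hC hBC hcover⟩
end

section
/- Let n ≥ 1 and let A = {a, b, c, d, e, f, g₁,…,g_n, h₁,…,h_n, z} consist of 2n+7 distinct letters. Let π̃ be the pair on A with π̃₀ listing A in the order a, b, c, d, e, g₁, h₁, g₂, h₂, …, g_n, h_n, f, z and π̃₁ listing A in the order z, d, h₁, g₁, h₂, g₂, …, h_n, g_n, c, b, f, e, a. Then π̃ is irreducible, and the pair π with π₀ listing A in the order a, b, c, d, h_n, f, h_{n−1}, g_n, h_{n−2}, g_{n−1}, …, h₁, g₂, e, g₁, z and π₁ listing A in the order z, d, c, b, f, h_n, g_n, h_{n−1}, g_{n−1},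 h_{n−2}, …, g₂, h₁, g₁, e, a belongs to the Rauzy class R(π̃). -/
open Equiv

variable {A : Type*} [Fintype A]

/-!
Write a pair as two words, the letters in increasing order of position. If a word ends in `w`, then
right Rauzy inductions with winner `w` rotate cyclically whatever follows `w` in the other word.
Five such rotations, with winners `z`, `g`, `f`, `d`, `z`, perform
```
  P d V g W f U z          P d W f V g U z
  z d H g R f T      ⇝*    z d R f H g T
```
that is, the blocks `V g` and `H g` jump over everything up to and including `f`. Doing this to
consecutive blocks one after the other reverses their order. Cut into two-letter blocks, the words
of `π̃` are
```
  a b c d (e g₁) (h₁ g₂) … (h_{n-1} g_n) h_n f z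
  z d (h₁ g₁) (h₂ g₂) … (h_n g_n) c b f e a
```
and moving the blocks past `f` in reverse order turns them into the words of `π`.
-/

theorem flatMap_finRange_pair_eq_range' (s n : ℕ) :
    (List.finRange n).flatMap (fun i : Fin n ↦ [s + 2 * (i : ℕ), s + 1 + 2 * (i : ℕ)]) =
      List.range' s (2 * n) := by
  induction n with
  | zero => rfl
  | succ n ih =>
    rw [List.finRange_succ_last, List.flatMap_append, List.flatMap_map, mul_add_one,
      ← List.range'_append_1]
    simp [ih, List.range'_succ, Nat.add_right_comm]

namespace RPair

section Rows

variable {π : RPair A} {ε : Bool}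

/-- The row `ε` of a pair as a word: the letters of `A` in increasing order of their position
under `π ε`. -/
def row (π : RPair A) (ε : Bool) : List A := List.ofFn (π ε).symm

theorem length_row (π : RPair A) (ε : Bool) : (π.row ε).length = Fintype.card A :=
  List.length_ofFn

theorem nodup_row (π : RPair A) (ε : Bool) : (π.row ε).Nodup :=
  List.nodup_ofFn.2 (π ε).symm.injective

theorem mem_row (π : RPair A) (ε : Bool) (x : A) : x ∈ π.row ε :=
  List.mem_ofFn.2 ((π ε).symm.surjective x)

theorem eq_of_row_eq {π' : RPair A} (h : π.row ε = π'.row ε) : π ε = π' ε :=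
  Equiv.symm_bijective.injective (DFunLike.coe_injective (List.ofFn_injective h))

theorem val_eq_length_of_row_eq {P Q : List A} {x : A} (h : π.row ε = P ++ x :: Q) :
    (π ε x : ℕ) = P.length := by
  have hlt : P.length < Fintype.card A := by
    rw [← length_row π ε, h]
    simp
  have hx : (π ε).symm ⟨P.length, hlt⟩ = x := by
    have hget : (π.row ε)[P.length]'(by rwa [length_row]) = x := by simp [h]
    simpa [row] using hget
  rw [← hx, apply_symm_apply]

theorem le_of_row_eq_append_singleton {B : List A} {w : A} (h : π.row ε = B ++ [w]) (x : A) :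
    π ε x ≤ π ε w := by
  have hlen : B.length + 1 = Fintype.card A := by simpa [h] using length_row π ε
  rw [Fin.le_def, val_eq_length_of_row_eq h]
  omega

theorem val_lt_length_iff_mem {P Q : List A} (h : π.row ε = P ++ Q) {x : A} :
    (π ε x : ℕ) < P.length ↔ x ∈ P := by
  rcases List.mem_append.1 (h ▸ mem_row π ε x) with hxP | hxQ
  · obtain ⟨P₁, P₂, rfl⟩ := List.append_of_mem hxP
    rw [val_eq_length_of_row_eq (P := P₁) (Q := P₂ ++ Q) (by simpa using h)]
    simp
  · have hxP : x ∉ P := (List.disjoint_of_nodup_append (h ▸ nodup_row π ε)).symm hxQ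
    obtain ⟨Q₁, Q₂, rfl⟩ := List.append_of_mem hxQ
    rw [val_eq_length_of_row_eq (P := P ++ Q₁) (Q := Q₂) (by simpa using h)]
    simp [hxP]

theorem apply_eq_of_mem_prefix {π' : RPair A} {P Q Q' : List A} {x : A} (h : π.row ε = P ++ Q)
    (h' : π'.row ε = P ++ Q') (hx : x ∈ P) : π ε x = π' ε x := by
  obtain ⟨P₁, P₂, rfl⟩ := List.append_of_mem hx
  apply Fin.ext
  rw [val_eq_length_of_row_eq (P := P₁) (Q := P₂ ++ Q) (by simpa using h),
    val_eq_length_of_row_eq (P := P₁) (Q := P₂ ++ Q') (by simpa using h')]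

theorem row_eq_of_map_val_eq_range {L : List A}
    (h : L.map (fun x ↦ (π ε x : ℕ)) = List.range (Fintype.card A)) : π.row ε = L := by
  have hfin : L.map (π ε) = List.finRange (Fintype.card A) := by
    apply List.map_injective_iff.2 Fin.val_injective
    simpa [Function.comp_def] using h
  calc π.row ε = (List.finRange _).map (π ε).symm := List.ofFn_eq_map
    _ = L := by simp [← hfin]

theorem exists_row_eq_of_perm {L : List A} (h : (π.row ε).Perm L) :
    ∃ π' : RPair A, π' (!ε) = π (!ε) ∧ π'.row ε = L := by
  classical
  have hlen : L.length = Fintype.card A := by rw [← h.length_eq, length_row]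
  let q : Fin L.length ≃ A :=
    List.Nodup.getEquivOfForallMemList L (h.nodup_iff.1 (nodup_row π ε))
      fun x ↦ h.mem_iff.1 (mem_row π ε x)
  refine ⟨Function.update π ε (q.symm.trans (finCongr hlen)), by simp, ?_⟩
  apply List.ext_getElem
  · rw [length_row, hlen]
  · intro i _ _
    simp [row, q]

end Rows

section Rotation

variable {π : RPair A} {ε : Bool} {B P : List A} {w : A}

theorem rightMove_of_row_eq {π' : RPair A} {X : List A} {y : A}
    (hwin : π.row ε = B ++ [w]) (hwin' : π' ε = π ε)
    (hlose : π.row (!ε) = P ++ w :: (X ++ [y])) (hlose' : π'.row (!ε) = P ++ w :: y :: X) :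
    RightMove π π' := by
  have hw : (π (!ε) w : ℕ) = P.length := val_eq_length_of_row_eq hlose
  have hprefix : π.row (!ε) = (P ++ [w]) ++ (X ++ [y]) := by simp [hlose]
  have hprefix' : π'.row (!ε) = (P ++ [w]) ++ y :: X := by simp [hlose']
  have le_iff_mem (x : A) : π (!ε) x ≤ π (!ε) w ↔ x ∈ P ++ [w] := by
    rw [← val_lt_length_iff_mem hprefix, Fin.le_def, hw, List.length_append,
      List.length_singleton, Nat.lt_succ_iff]
  refine ⟨ε, w, y, le_of_row_eq_append_singleton hwin,
    le_of_row_eq_append_singleton (B := P ++ w :: X) (by simp [hlose]), hwin', ?_, ?_, ?_⟩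
  · intro x hx
    exact apply_eq_of_mem_prefix hprefix' hprefix ((le_iff_mem x).1 hx)
  · rw [val_eq_length_of_row_eq hprefix', hw]
    simp
  · intro x hx hxy
    have hxX : x ∈ X := by
      have hmem := mem_row π (!ε) x
      rw [hprefix, List.mem_append, List.mem_append (s := X), List.mem_singleton] at hmem
      exact (hmem.resolve_left (hx ∘ (le_iff_mem x).2)).resolve_right hxy
    obtain ⟨X₁, X₂, rfl⟩ := List.append_of_mem hxX
    rw [val_eq_length_of_row_eq (P := P ++ w :: y :: X₁) (Q := X₂) (by simp [hlose']),
      val_eq_length_of_row_eq (P := P ++ w :: X₁) (Q := X₂ ++ [y]) (by simp [hlose])]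
    simp only [List.length_append, List.length_cons]
    omega

theorem exists_mem_RClass_row_eq_rotate {X Y : List A}
    (hwin : π.row ε = B ++ [w]) (hlose : π.row (!ε) = P ++ w :: (X ++ Y)) :
    ∃ τ ∈ RClass π, τ.row ε = B ++ [w] ∧ τ.row (!ε) = P ++ w :: (Y ++ X) := by
  induction Y using List.reverseRecOn generalizing π X with
  | nil => exact ⟨π, .refl, hwin, by simpa using hlose⟩
  | append_singleton Y y ih =>
    have hperm : (π.row (!ε)).Perm (P ++ w :: y :: (X ++ Y)) := by
      rw [hlose, ← List.append_assoc X]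
      exact ((List.perm_append_singleton y (X ++ Y)).cons w).append_left P
    obtain ⟨σ, hσ, hσlose⟩ := exists_row_eq_of_perm hperm
    rw [Bool.not_not] at hσ
    have hmove : RightMove π σ :=
      rightMove_of_row_eq (X := X ++ Y) (y := y) hwin hσ (by simpa using hlose) hσlose
    have hσwin : σ.row ε = B ++ [w] := by rw [row, hσ, ← hwin, row]
    obtain ⟨τ, hτ, hτwin, hτlose⟩ := ih (X := y :: X) hσwin hσlose
    exact ⟨τ, .head hmove hτ, hτwin, by simpa using hτlose⟩

end Rotation

/-- Reachability between pairs of words `(top, bottom)`: from every pair whose rows are the words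
of `s`, right Rauzy inductions lead to a pair whose rows are the words of `t`. -/
def Reaches (s t : List A × List A) : Prop :=
  ∀ π : RPair A, (π.row false, π.row true) = s →
    ∃ τ ∈ RClass π, (τ.row false, τ.row true) = t

local infix:50 " ⇝* " => Reaches

namespace Reaches

theorem refl (s : List A × List A) : s ⇝* s := fun π hπ ↦ ⟨π, .refl, hπ⟩

theorem trans {s t r : List A × List A} (hst : s ⇝* t) (htr : t ⇝* r) : s ⇝* r := by
  intro π hπ
  obtain ⟨σ, hσ, hσt⟩ := hst π hπ
  obtain ⟨τ, hτ, hτr⟩ := htr σ hσt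
  exact ⟨τ, Relation.ReflTransGen.trans hσ hτ, hτr⟩

instance : Trans (Reaches (A := A)) Reaches Reaches := ⟨trans⟩

theorem mem_RClass {π τ : RPair A} {s t : List A × List A} (hst : s ⇝* t)
    (hπ : (π.row false, π.row true) = s) (hτ : (τ.row false, τ.row true) = t) :
    τ ∈ RClass π := by
  obtain ⟨σ, hσ, rfl⟩ := hst π hπ
  obtain ⟨hfalse, htrue⟩ := Prod.mk.inj hτ
  have hτσ : τ = σ := funext (Bool.rec (eq_of_row_eq hfalse) (eq_of_row_eq htrue))
  exact hτσ ▸ hσ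

theorem rotate_bottom (B P : List A) (w : A) (X Y : List A) :
    (B ++ [w], P ++ w :: (X ++ Y)) ⇝* (B ++ [w], P ++ w :: (Y ++ X)) := by
  intro π hπ
  obtain ⟨htop, hbot⟩ := Prod.mk.inj hπ
  obtain ⟨τ, hτ, hτtop, hτbot⟩ := exists_mem_RClass_row_eq_rotate (ε := false) htop hbot
  exact ⟨τ, hτ, Prod.ext hτtop hτbot⟩

theorem rotate_top (B P : List A) (w : A) (X Y : List A) :
    (P ++ w :: (X ++ Y), B ++ [w]) ⇝* (P ++ w :: (Y ++ X), B ++ [w]) := by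
  intro π hπ
  obtain ⟨htop, hbot⟩ := Prod.mk.inj hπ
  obtain ⟨τ, hτ, hτbot, hτtop⟩ := exists_mem_RClass_row_eq_rotate (ε := true) hbot htop
  exact ⟨τ, hτ, Prod.ext hτtop hτbot⟩

theorem move_block (P V W U H R T : List A) (d g f z : A) :
    (P ++ [d] ++ V ++ [g] ++ W ++ [f] ++ U ++ [z],
      [z, d] ++ H ++ [g] ++ R ++ [f] ++ T) ⇝*
    (P ++ [d] ++ W ++ [f] ++ V ++ [g] ++ U ++ [z],
      [z, d] ++ R ++ [f] ++ H ++ [g] ++ T) :=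
  calc (P ++ [d] ++ V ++ [g] ++ W ++ [f] ++ U ++ [z],
      [z, d] ++ H ++ [g] ++ R ++ [f] ++ T)
    _ ⇝* (P ++ [d] ++ V ++ [g] ++ W ++ [f] ++ U ++ [z],
        [z] ++ R ++ [f] ++ T ++ [d] ++ H ++ [g]) := by
      simpa using rotate_bottom (P ++ [d] ++ V ++ [g] ++ W ++ [f] ++ U) [] z
        ([d] ++ H ++ [g]) (R ++ [f] ++ T)
    _ ⇝* (P ++ [d] ++ V ++ [g] ++ U ++ [z] ++ W ++ [f],
        [z] ++ R ++ [f] ++ T ++ [d] ++ H ++ [g]) := by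
      simpa using rotate_top ([z] ++ R ++ [f] ++ T ++ [d] ++ H) (P ++ [d] ++ V) g
        (W ++ [f]) (U ++ [z])
    _ ⇝* (P ++ [d] ++ V ++ [g] ++ U ++ [z] ++ W ++ [f],
        [z] ++ R ++ [f] ++ H ++ [g] ++ T ++ [d]) := by
      simpa using rotate_bottom (P ++ [d] ++ V ++ [g] ++ U ++ [z] ++ W) ([z] ++ R) f
        (T ++ [d]) (H ++ [g])
    _ ⇝* (P ++ [d] ++ W ++ [f] ++ V ++ [g] ++ U ++ [z],
        [z] ++ R ++ [f] ++ H ++ [g] ++ T ++ [d]) := by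
      simpa using rotate_top ([z] ++ R ++ [f] ++ H ++ [g] ++ T) P d
        (V ++ [g] ++ U ++ [z]) (W ++ [f])
    _ ⇝* (P ++ [d] ++ W ++ [f] ++ V ++ [g] ++ U ++ [z],
        [z, d] ++ R ++ [f] ++ H ++ [g] ++ T) := by
      simpa using rotate_bottom (P ++ [d] ++ W ++ [f] ++ V ++ [g] ++ U) [] z
        (R ++ [f] ++ H ++ [g] ++ T) [d]

theorem reverse_blocks {ι : Type*} (l : List ι) (V H : ι → List A) (g : ι → A)
    (P W U R T : List A) (d f z : A) :
    (P ++ [d] ++ l.flatMap (fun i ↦ V i ++ [g i]) ++ W ++ [f] ++ U ++ [z],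
      [z, d] ++ l.flatMap (fun i ↦ H i ++ [g i]) ++ R ++ [f] ++ T) ⇝*
    (P ++ [d] ++ W ++ [f] ++ l.reverse.flatMap (fun i ↦ V i ++ [g i]) ++ U ++ [z],
      [z, d] ++ R ++ [f] ++ l.reverse.flatMap (fun i ↦ H i ++ [g i]) ++ T) := by
  induction l generalizing U T with
  | nil => simpa using refl _
  | cons i l ih =>
    have move_first := move_block P (V i) (l.flatMap (fun i ↦ V i ++ [g i]) ++ W) U (H i)
      (l.flatMap (fun i ↦ H i ++ [g i]) ++ R) T d (g i) f z
    have reverse_rest := ih (V i ++ [g i] ++ U) (H i ++ [g i] ++ T)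
    simp only [List.flatMap_cons, List.reverse_cons, List.flatMap_append, List.flatMap_nil,
      List.append_assoc, List.append_nil] at move_first reverse_rest ⊢
    exact move_first.trans reverse_rest

end Reaches

section Positions

variable {π : RPair A} {ε : Bool} {n : ℕ} {P Q : List A} {x y : Fin n → A}

theorem row_eq_append_pairs_append
    (hP : P.map (fun a ↦ (π ε a : ℕ)) = List.range P.length)
    (hx : ∀ i, (π ε (x i) : ℕ) = P.length + 2 * i)
    (hy : ∀ i, (π ε (y i) : ℕ) = P.length + 1 + 2 * i)
    (hQ : Q.map (fun a ↦ (π ε a : ℕ)) = List.range' (2 * n + P.length) Q.length)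
    (hcard : Fintype.card A = 2 * n + P.length + Q.length) :
    π.row ε = P ++ (List.finRange n).flatMap (fun i ↦ [x i, y i]) ++ Q := by
  apply row_eq_of_map_val_eq_range
  have hpairs : ((List.finRange n).flatMap (fun i ↦ [x i, y i])).map (fun a ↦ (π ε a : ℕ)) =
      List.range' P.length (2 * n) := by
    simp only [List.map_flatMap, List.map_cons, List.map_nil, hx, hy,
      flatMap_finRange_pair_eq_range']
  rw [List.map_append, List.map_append, hP, hpairs, hQ, hcard, Nat.add_comm (2 * n),
    List.range_eq_range', List.range_eq_range', ← List.range'_append_1, ← List.range'_append_1,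
    Nat.zero_add, Nat.zero_add]

theorem row_eq_append_reverse_pairs_append
    (hP : P.map (fun a ↦ (π ε a : ℕ)) = List.range P.length)
    (hx : ∀ i : Fin n, (π ε (x i) : ℕ) = P.length + 2 * (n - 1 - (i : ℕ)))
    (hy : ∀ i : Fin n, (π ε (y i) : ℕ) = P.length + 1 + 2 * (n - 1 - (i : ℕ)))
    (hQ : Q.map (fun a ↦ (π ε a : ℕ)) = List.range' (2 * n + P.length) Q.length)
    (hcard : Fintype.card A = 2 * n + P.length + Q.length) :
    π.row ε = P ++ (List.finRange n).reverse.flatMap (fun i ↦ [x i, y i]) ++ Q := by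
  have sub_rev (i : Fin n) : n - 1 - (i.rev : ℕ) = i := by
    rw [Fin.val_rev]
    omega
  rw [List.finRange_reverse, List.flatMap_map]
  exact row_eq_append_pairs_append hP (fun i ↦ by rw [hx, sub_rev])
    (fun i ↦ by rw [hy, sub_rev]) hQ hcard

end Positions

end RPair

theorem pairIrreducible_of_first_of_last {π : RPair A} {a : A} (hfirst : (π false a : ℕ) = 0)
    (hlast : (π true a : ℕ) + 1 = Fintype.card A) : PairIrreducible π := by
  intro k hk
  have hle : π true a ≤ k := hk a (by simp [Fin.le_def, hfirst])
  rw [Fin.le_def] at hle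
  omega

/-- for `A = {a,b,c,d,e,f,g₁,…,g_n,h₁,…,h_n,z}` (2n+7 distinct
letters), `π̃₀ : a b c d e g₁ h₁ … g_n h_n f z`,
`π̃₁ : z d h₁ g₁ … h_n g_n c b f e a` is irreducible, and the pair
`π₀ : a b c d h_n f h_{n−1} g_n … h₁ g₂ e g₁ z`,
`π₁ : z d c b f h_n g_n h_{n−1} g_{n−1} … g₂ h₁ g₁ e a` is in its Rauzy class.
(Positions 0-indexed; `g j` denotes `g_{j+1}`.) -/
theorem stmt18 {A : Type*} [Fintype A] [DecidableEq A] [Nonempty A]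
    (n : ℕ) (hn : 1 ≤ n) (a b c d e f z : A) (g h : Fin n → A)
    (hcard : Fintype.card A = 2 * n + 7)
    (pt π : RPair A)
    -- π̃₀ lists a, b, c, d, e, g₁, h₁, …, g_n, h_n, f, z
    (ht0a : (pt false a : ℕ) = 0) (ht0b : (pt false b : ℕ) = 1)
    (ht0c : (pt false c : ℕ) = 2) (ht0d : (pt false d : ℕ) = 3)
    (ht0e : (pt false e : ℕ) = 4)
    (ht0g : ∀ j : Fin n, (pt false (g j) : ℕ) = 5 + 2 * (j : ℕ))
    (ht0h : ∀ j : Fin n, (pt false (h j) : ℕ) = 6 + 2 * (j : ℕ))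
    (ht0f : (pt false f : ℕ) = 2 * n + 5) (ht0z : (pt false z : ℕ) = 2 * n + 6)
    -- π̃₁ lists z, d, h₁, g₁, …, h_n, g_n, c, b, f, e, a
    (ht1z : (pt true z : ℕ) = 0) (ht1d : (pt true d : ℕ) = 1)
    (ht1h : ∀ j : Fin n, (pt true (h j) : ℕ) = 2 + 2 * (j : ℕ))
    (ht1g : ∀ j : Fin n, (pt true (g j) : ℕ) = 3 + 2 * (j : ℕ))
    (ht1c : (pt true c : ℕ) = 2 * n + 2) (ht1b : (pt true b : ℕ) = 2 * n + 3)
    (ht1f : (pt true f : ℕ) = 2 * n + 4) (ht1e : (pt true e : ℕ) = 2 * n + 5)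
    (ht1a : (pt true a : ℕ) = 2 * n + 6)
    -- π₀ lists a, b, c, d, h_n, f, h_{n−1}, g_n, …, h₁, g₂, e, g₁, z
    (h0a : (π false a : ℕ) = 0) (h0b : (π false b : ℕ) = 1)
    (h0c : (π false c : ℕ) = 2) (h0d : (π false d : ℕ) = 3)
    (h0h : ∀ j : Fin n, (π false (h j) : ℕ) = 2 * (n - 1 - (j : ℕ)) + 4)
    (h0f : (π false f : ℕ) = 5)
    (h0g : ∀ j : Fin n, (π false (g j) : ℕ) = 2 * (n - 1 - (j : ℕ)) + 7)
    (h0e : (π false e : ℕ) = 2 * n + 4) (h0z : (π false z : ℕ) = 2 * n + 6)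
    -- π₁ lists z, d, c, b, f, h_n, g_n, h_{n−1}, g_{n−1}, …, g₂, h₁, g₁, e, a
    (h1z : (π true z : ℕ) = 0) (h1d : (π true d : ℕ) = 1)
    (h1c : (π true c : ℕ) = 2) (h1b : (π true b : ℕ) = 3)
    (h1f : (π true f : ℕ) = 4)
    (h1h : ∀ j : Fin n, (π true (h j) : ℕ) = 5 + 2 * (n - 1 - (j : ℕ)))
    (h1g : ∀ j : Fin n, (π true (g j) : ℕ) = 6 + 2 * (n - 1 - (j : ℕ)))
    (h1e : (π true e : ℕ) = 2 * n + 5) (h1a : (π true a : ℕ) = 2 * n + 6) :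
    PairIrreducible pt ∧ π ∈ RClass pt := by
  refine ⟨pairIrreducible_of_first_of_last ht0a (by omega), ?_⟩
  let u : Fin (n + 1) → A := Fin.cons e h
  have htu (i : Fin (n + 1)) : (pt false (u i) : ℕ) = 4 + 2 * i := by
    cases i using Fin.cases <;> grind [Fin.cons_zero, Fin.cons_succ]
  have hu (i : Fin (n + 1)) : (π false (u i) : ℕ) = 4 + 2 * (n - i) := by
    cases i using Fin.cases <;> grind [Fin.cons_zero, Fin.cons_succ]
  have reach := RPair.Reaches.reverse_blocks (List.finRange n) (fun i ↦ [u i.castSucc])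
    (fun i ↦ [h i]) g [a, b, c] [u (Fin.last n)] [] [c, b] [e, a] d f z
  refine reach.mem_RClass (Prod.ext ?_ ?_) (Prod.ext ?_ ?_)
  · simpa using RPair.row_eq_append_pairs_append (P := [a, b, c, d]) (Q := [u (Fin.last n), f, z])
      (by simp [*, List.range_succ]) (htu ·.castSucc) ht0g
      (by simp [*, List.range'_succ, Nat.add_comm 4]) hcard
  · simpa using RPair.row_eq_append_pairs_append (P := [z, d]) (Q := [c, b, f, e, a])
      (by simp [*, List.range_succ]) ht1h ht1g (by simp [*, List.range'_succ]) hcard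
  · simpa using RPair.row_eq_append_reverse_pairs_append
      (P := [a, b, c, d, u (Fin.last n), f]) (Q := [z])
      (by simp [*, List.range_succ]) (fun i ↦ (hu i.castSucc).trans (by grind))
      (fun i ↦ (h0g i).trans (Nat.add_comm _ _)) (by simp [*]) hcard
  · simpa using RPair.row_eq_append_reverse_pairs_append (P := [z, d, c, b, f]) (Q := [e, a])
      (by simp [*, List.range_succ]) h1h h1g (by simp [*, List.range'_succ]) hcard
end

section
/- Let n ≥ 1 and let A = {a, b, c, d, e₁,…,e_n, f₁,…,f_n, z} consist of 2n+5 distinct letters. Let π̃ be the pair on A with π̃₀ listing A in the order a, b, c, e₁, f₁, e₂, f₂, …, e_n, f_n, d, z and π̃₁ listing A in the order z, f₁, e₁, f₂, e₂, …, f_n, e_n, d, c, b, a. Then π̃ is irreducible, and the pair π with π₀ listing A in the order a, f_n, d, f_{n−1}, e_n, f_{n−2}, e_{n−1}, …, f₁, e₂, b, c, e₁, z and π₁ listing A in the order z, d, f_n, e_n, f_{n−1}, e_{n−1}, …, e₂, f₁, e₁, c, b, a belongs to the Rauzy class R(π̃). -/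
open Equiv

variable {A : Type*} [Fintype A]

/-!
Write a pair as its two words and put `e_{n+1} = d`. A right Rauzy induction moves the last letter
of one word to just behind the occurrence in it of the other word's last letter `w`; iterating it
rotates the part of the word behind `w` arbitrarily. Starting from `π̃`, two rotations (behind `a`
in the top word, behind `e_n` in the bottom word) lead to the case `k = n` of the pair

  `a f_n e_{n+1} … f_k e_{k+1} z b c e₁ f₁ … e_{k-1} f_{k-1} e_k`
  `z f₁ e₁ … f_k e_k c b a e_{n+1} f_n … e_{k+2} f_{k+1} e_{k+1}`.

Rotating behind `e_{k+1}` in the top word and then behind `e_{k-1}` in the bottom word decreases `k`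
by one, and from `k = 1` rotations behind `e₂` in the top word and `z` in the bottom word give `π`.
-/

namespace RauzyInduction

open Relation

section Word

variable {α : Type*} {n : ℕ}

/-- The word listing the letters of `α` in the order of the positions given by `g`. -/
def word (g : α ≃ Fin n) : List α := List.ofFn g.symm

theorem getElem?_word_eq_some_iff {g : α ≃ Fin n} {i : ℕ} {x : α} :
    (word g)[i]? = some x ↔ (g x : ℕ) = i := by
  rw [List.getElem?_eq_some_iff]
  simp only [word, List.length_ofFn, List.getElem_ofFn, Equiv.symm_apply_eq, Fin.ext_iff]
  exact ⟨fun ⟨_, h⟩ => h.symm, fun h => ⟨h ▸ (g x).isLt, h.symm⟩⟩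

theorem getElem?_word (g : α ≃ Fin n) (x : α) : (word g)[(g x : ℕ)]? = some x :=
  getElem?_word_eq_some_iff.2 rfl

theorem length_word (g : α ≃ Fin n) : (word g).length = n := List.length_ofFn

theorem nodup_word (g : α ≃ Fin n) : (word g).Nodup := List.nodup_ofFn.2 g.symm.injective

theorem mem_word (g : α ≃ Fin n) (x : α) : x ∈ word g := List.mem_of_getElem? (getElem?_word g x)

theorem word_injective : Function.Injective (word : α ≃ Fin n → List α) := fun _ _ h =>
  Equiv.symm_bijective.injective (Equiv.coe_fn_injective (List.ofFn_injective h))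

theorem exists_word_eq_of_perm {g : α ≃ Fin n} {l : List α} (h : l.Perm (word g)) :
    ∃ g' : α ≃ Fin n, word g' = l := by
  classical
  obtain rfl : l.length = n := h.length_eq.trans (length_word g)
  refine ⟨(List.Nodup.getEquivOfForallMemList l (h.nodup_iff.2 (nodup_word g))
    fun x => h.mem_iff.2 (mem_word g x)).symm, ?_⟩
  exact List.ofFn_get l

theorem le_of_word_eq_concat {g : α ≃ Fin n} {l : List α} {w : α} (h : word g = l ++ [w]) (x : α) :
    g x ≤ g w := by
  have hlen : l.length + 1 = n := by simpa [h] using length_word g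
  have hw : (g w : ℕ) = l.length := getElem?_word_eq_some_iff.1 (by simp [h])
  exact Fin.le_def.2 (by omega)

/-- The position function `p` takes the values `s, s + 1, s + 2, …` along the word `l`. -/
def ConsecutiveFrom (p : α → ℕ) (s : ℕ) (l : List α) : Prop :=
  l.map p = List.range' s l.length

theorem consecutiveFrom_nil (p : α → ℕ) (s : ℕ) : ConsecutiveFrom p s [] := rfl

theorem consecutiveFrom_cons {p : α → ℕ} {s : ℕ} {x : α} {l : List α} :
    ConsecutiveFrom p s (x :: l) ↔ p x = s ∧ ConsecutiveFrom p (s + 1) l := by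
  simp [ConsecutiveFrom, List.range'_succ]

theorem consecutiveFrom_append {p : α → ℕ} {s : ℕ} {l l' : List α} :
    ConsecutiveFrom p s (l ++ l') ↔
      ConsecutiveFrom p s l ∧ ConsecutiveFrom p (s + l.length) l' := by
  rw [ConsecutiveFrom, List.map_append, List.length_append, ← List.range'_append_1,
    List.append_eq_append_iff_of_size_eq_left (by simp), ConsecutiveFrom, ConsecutiveFrom]

theorem word_eq_of_consecutiveFrom {g : α ≃ Fin n} {l : List α} (hlen : l.length = n)
    (h : ConsecutiveFrom (fun x => (g x : ℕ)) 0 l) : word g = l := by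
  have hpos : (word g).map (fun x => (g x : ℕ)) = List.range' 0 n :=
    List.ext_getElem (by simp [length_word]) (by simp [word])
  refine List.map_injective_iff.2 (Fin.val_injective.comp g.injective) ?_
  exact hpos.trans (hlen ▸ h.symm)

/-- The word `u i, v i, u j, v j, …` for the list of indices `i, j, …`. -/
def interleave {ι : Type*} (u v : ι → α) (l : List ι) : List α := l.flatMap fun i => [u i, v i]

section Interleave

variable {ι : Type*} (u v : ι → α)

@[simp]
theorem interleave_nil : interleave u v [] = [] := rfl

@[simp]
theorem interleave_cons (i : ι) (l : List ι) :
    interleave u v (i :: l) = u i :: v i :: interleave u v l := rfl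

@[simp]
theorem interleave_append (l l' : List ι) :
    interleave u v (l ++ l') = interleave u v l ++ interleave u v l' := List.flatMap_append

@[simp]
theorem length_interleave (l : List ι) : (interleave u v l).length = 2 * l.length := by
  simp [interleave, mul_comm]

variable {u v}

theorem consecutiveFrom_interleave {p : α → ℕ} {s : ℕ} {l : List ι}
    (hu : ∀ (j : ℕ) (hj : j < l.length), p (u l[j]) = s + 2 * j)
    (hv : ∀ (j : ℕ) (hj : j < l.length), p (v l[j]) = s + 2 * j + 1) :
    ConsecutiveFrom p s (interleave u v l) := by
  induction l generalizing s with
  | nil => exact consecutiveFrom_nil p s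
  | cons i l ih =>
    rw [interleave_cons, consecutiveFrom_cons, consecutiveFrom_cons]
    refine ⟨hu 0 (by simp), hv 0 (by simp), ih (fun j hj => ?_) fun j hj => ?_⟩
    · have := hu (j + 1) (by simpa using hj)
      rw [List.getElem_cons_succ] at this
      omega
    · have := hv (j + 1) (by simpa using hj)
      rw [List.getElem_cons_succ] at this
      omega

theorem consecutiveFrom_interleave_range {u v : ℕ → α} {p : α → ℕ} {s : ℕ}
    (hu : ∀ i < n, p (u i) = s + 2 * i) (hv : ∀ i < n, p (v i) = s + 1 + 2 * i) :
    ConsecutiveFrom p s (interleave u v (List.range n)) := by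
  refine consecutiveFrom_interleave (fun j hj => ?_) fun j hj => ?_ <;>
    rw [List.length_range] at hj <;> rw [List.getElem_range]
  · exact hu j hj
  · rw [hv j hj, add_right_comm]

theorem consecutiveFrom_interleave_reverse_Ico {u v : ℕ → α} {p : α → ℕ} {s : ℕ}
    (hu : ∀ i < n, p (u i) = s + 2 * (n - 1 - i))
    (hv : ∀ i < n, p (v i) = s + 1 + 2 * (n - 1 - i)) :
    ConsecutiveFrom p s (interleave u v (List.Ico 0 n).reverse) := by
  have getElem_reverse (j : ℕ) (hj : j < (List.Ico 0 n).reverse.length) :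
      j < n ∧ (List.Ico 0 n).reverse[j] = n - 1 - j :=
    ⟨by simpa using hj, by simp [List.Ico.zero_bot]⟩
  refine consecutiveFrom_interleave (fun j hj => ?_) fun j hj => ?_ <;>
    obtain ⟨hjn, hget⟩ := getElem_reverse j hj <;> rw [hget]
  · rw [hu _ (by omega)]
    omega
  · rw [hv _ (by omega)]
    omega

end Interleave

end Word

section WordMove

variable {α : Type*}

/-- Right Rauzy induction on the pair (top word, bottom word); `w` is the winner and `v` the
loser. -/
inductive WordMove : List α × List α → List α × List α → Prop
  | bottom (T X Y : List α) (w v : α) :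
    WordMove (T ++ [w], X ++ w :: (Y ++ [v])) (T ++ [w], X ++ w :: v :: Y)
  | top (T X Y : List α) (w v : α) :
    WordMove (X ++ w :: (Y ++ [v]), T ++ [w]) (X ++ w :: v :: Y, T ++ [w])

theorem WordMove.swap {p q : List α × List α} (h : WordMove p q) : WordMove p.swap q.swap := by
  cases h with
  | bottom T X Y w v => exact .top T X Y w v
  | top T X Y w v => exact .bottom T X Y w v

theorem reflTransGen_wordMove_rotate_bottom (T X Y Z : List α) (w : α) :
    ReflTransGen WordMove (T ++ [w], X ++ w :: (Y ++ Z)) (T ++ [w], X ++ w :: (Z ++ Y)) := by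
  induction Z using List.reverseRecOn generalizing Y with
  | nil => simpa using ReflTransGen.refl
  | append_singleton Z v ih =>
    have hstep := WordMove.bottom T X (Y ++ Z) w v
    have hrest := ih (v :: Y)
    simp only [List.append_assoc, List.cons_append, List.nil_append] at hstep hrest ⊢
    exact .head hstep hrest

theorem reflTransGen_wordMove_rotate_top (T X Y Z : List α) (w : α) :
    ReflTransGen WordMove (X ++ w :: (Y ++ Z), T ++ [w]) (X ++ w :: (Z ++ Y), T ++ [w]) :=
  (reflTransGen_wordMove_rotate_bottom T X Y Z w).lift Prod.swap fun _ _ => WordMove.swap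

end WordMove

section Lift

/-- The top and bottom words of a pair. -/
def words (π : RPair A) : List A × List A := (word (π false), word (π true))

theorem words_injective : Function.Injective (words : RPair A → List A × List A) := by
  intro π ρ h
  obtain ⟨htop, hbottom⟩ := Prod.ext_iff.1 h
  funext ε
  cases ε
  · exact word_injective htop
  · exact word_injective hbottom

theorem rightMove_update {π : RPair A} {ε : Bool} {g : A ≃ Fin (Fintype.card A)}
    {T X Y : List A} {w v : A} (hwin : word (π ε) = T ++ [w])
    (hlose : word (π !ε) = X ++ w :: (Y ++ [v])) (hg : word g = X ++ w :: v :: Y) :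
    RightMove π (Function.update π (!ε) g) := by
  have hw : (π (!ε) w : ℕ) = X.length := getElem?_word_eq_some_iff.1 (by simp [hlose])
  have hv : (g v : ℕ) = X.length + 1 := getElem?_word_eq_some_iff.1 (by simp [hg])
  refine ⟨ε, w, v, le_of_word_eq_concat hwin,
    le_of_word_eq_concat (l := X ++ w :: Y) (by simp [hlose]), by simp, fun x hx => ?_,
    by simp [hv, hw], fun x hx hxv => ?_⟩
  · have hpos := getElem?_word (π !ε) x
    rw [Fin.le_def] at hx
    rw [Function.update_self, Fin.ext_iff, ← getElem?_word_eq_some_iff]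
    grind
  · have hpos := getElem?_word (π !ε) x
    rw [Fin.le_def] at hx
    rw [Function.update_self, ← getElem?_word_eq_some_iff]
    grind

theorem exists_rightMove_of_word_eq {π : RPair A} {ε : Bool} {T X Y : List A} {w v : A}
    (hwin : word (π ε) = T ++ [w]) (hlose : word (π !ε) = X ++ w :: (Y ++ [v])) :
    ∃ π', RightMove π π' ∧ word (π' ε) = T ++ [w] ∧ word (π' !ε) = X ++ w :: v :: Y := by
  obtain ⟨g, hg⟩ := exists_word_eq_of_perm (g := π !ε) (l := X ++ w :: v :: Y) <| by
    rw [hlose]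
    exact ((List.perm_append_singleton v Y).symm.cons w).append_left X
  exact ⟨Function.update π (!ε) g, rightMove_update hwin hlose hg, by simpa using hwin,
    by simpa using hg⟩

theorem WordMove.exists_rightMove {π : RPair A} {q : List A × List A}
    (h : WordMove (words π) q) : ∃ π', RightMove π π' ∧ words π' = q := by
  generalize hp : words π = p at h
  cases h with
  | bottom T X Y w v =>
    obtain ⟨htop, hbottom⟩ := Prod.ext_iff.1 hp
    obtain ⟨π', hmove, htop', hbottom'⟩ := exists_rightMove_of_word_eq (ε := false) htop hbottom
    exact ⟨π', hmove, Prod.ext htop' hbottom'⟩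
  | top T X Y w v =>
    obtain ⟨htop, hbottom⟩ := Prod.ext_iff.1 hp
    obtain ⟨π', hmove, hbottom', htop'⟩ := exists_rightMove_of_word_eq (ε := true) hbottom htop
    exact ⟨π', hmove, Prod.ext htop' hbottom'⟩

theorem exists_mem_rClass_words_eq {π : RPair A} {q : List A × List A}
    (h : ReflTransGen WordMove (words π) q) : ∃ π' ∈ RClass π, words π' = q := by
  induction h with
  | refl => exact ⟨π, .refl, rfl⟩
  | tail _ hmove ih =>
    obtain ⟨ρ, hρ, rfl⟩ := ih
    obtain ⟨π', hstep, hπ'⟩ := hmove.exists_rightMove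
    exact ⟨π', .tail hρ hstep, hπ'⟩

theorem mem_rClass_of_reflTransGen_wordMove {π ρ : RPair A}
    (h : ReflTransGen WordMove (words π) (words ρ)) : ρ ∈ RClass π := by
  obtain ⟨π', hmem, hwords⟩ := exists_mem_rClass_words_eq h
  exact words_injective hwords ▸ hmem

theorem pairIrreducible_of_first_eq_last {π : RPair A} {x : A} (hfirst : (π false x : ℕ) = 0)
    (hlast : (π true x : ℕ) + 1 = Fintype.card A) : PairIrreducible π := by
  intro k hk
  have hle : (π true x : ℕ) ≤ k := hk x (Fin.le_def.2 (by omega))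
  have := k.isLt
  omega

end Lift

section Path

variable {α : Type*} (a b c z : α) (E F : ℕ → α) (n : ℕ)

/-- The words of `π̃`, with `E i = e_{i+1}`, `F i = f_{i+1}` and `E n = d`. -/
def sourceWords : List α × List α :=
  (a :: b :: c :: interleave E F (List.range n) ++ [E n, z],
    z :: interleave F E (List.range n) ++ [E n, c, b, a])

/-- The words of `π`, with `E i = e_{i+1}`, `F i = f_{i+1}` and `E n = d`. -/
def targetWords : List α × List α :=
  (a :: interleave F (fun i => E (i + 1)) (List.Ico 0 n).reverse ++ [b, c, E 0, z],
    z :: interleave (fun i => E (i + 1)) F (List.Ico 0 n).reverse ++ [E 0, c, b, a])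

/-- The intermediate words on the path from `π̃` to `π`; the path runs through them in the order
`k = n - 1, …, 1, 0`. -/
def stageWords (k : ℕ) : List α × List α :=
  (a :: interleave F (fun i => E (i + 1)) (List.Ico k n).reverse ++
      [z, b, c] ++ interleave E F (List.range k) ++ [E k],
    z :: interleave F E (List.range (k + 1)) ++
      [c, b, a] ++ interleave (fun i => E (i + 1)) F (List.Ico (k + 1) n).reverse ++ [E (k + 1)])

theorem reflTransGen_sourceWords_stageWords :
    ReflTransGen WordMove (sourceWords a b c z E F (n + 1)) (stageWords a b c z E F (n + 1) n) := by
  have htop : ReflTransGen WordMove (sourceWords a b c z E F (n + 1))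
      ((stageWords a b c z E F (n + 1) n).1, (sourceWords a b c z E F (n + 1)).2) := by
    simpa [sourceWords, stageWords, List.range_succ] using reflTransGen_wordMove_rotate_top
      (z :: interleave F E (List.range (n + 1)) ++ [E (n + 1), c, b]) []
      (b :: c :: interleave E F (List.range n) ++ [E n]) [F n, E (n + 1), z] a
  have hbottom : ReflTransGen WordMove
      ((stageWords a b c z E F (n + 1) n).1, (sourceWords a b c z E F (n + 1)).2)
      (stageWords a b c z E F (n + 1) n) := by
    simpa [sourceWords, stageWords, List.range_succ] using reflTransGen_wordMove_rotate_bottom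
      (a :: F n :: E (n + 1) :: z :: b :: c :: interleave E F (List.range n))
      (z :: interleave F E (List.range n) ++ [F n]) [E (n + 1)] [c, b, a] (E n)
  exact htop.trans hbottom

variable {n} {k : ℕ}

theorem reflTransGen_stageWords_succ (hk : k + 1 < n) :
    ReflTransGen WordMove (stageWords a b c z E F n (k + 1)) (stageWords a b c z E F n k) := by
  have hIco_succ : List.Ico (k + 1) n = (k + 1) :: List.Ico (k + 2) n := List.Ico.eq_cons hk
  have hIco : List.Ico k n = k :: (k + 1) :: List.Ico (k + 2) n := by
    rw [List.Ico.eq_cons (by omega), hIco_succ]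
  have htop : ReflTransGen WordMove (stageWords a b c z E F n (k + 1))
      ((stageWords a b c z E F n k).1, (stageWords a b c z E F n (k + 1)).2) := by
    simpa [stageWords, List.range_succ, hIco, hIco_succ] using reflTransGen_wordMove_rotate_top
      (z :: interleave F E (List.range (k + 2)) ++ [c, b, a] ++
        interleave (fun i => E (i + 1)) F (List.Ico (k + 2) n).reverse)
      (a :: interleave F (fun i => E (i + 1)) (List.Ico (k + 2) n).reverse ++ [F (k + 1)])
      (z :: b :: c :: interleave E F (List.range k) ++ [E k]) [F k, E (k + 1)] (E (k + 2))
  have hbottom : ReflTransGen WordMove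
      ((stageWords a b c z E F n k).1, (stageWords a b c z E F n (k + 1)).2)
      (stageWords a b c z E F n k) := by
    simpa [stageWords, List.range_succ, hIco, hIco_succ] using reflTransGen_wordMove_rotate_bottom
      (a :: interleave F (fun i => E (i + 1)) (List.Ico k n).reverse ++ [z, b, c] ++
        interleave E F (List.range k))
      (z :: interleave F E (List.range k) ++ [F k]) [F (k + 1), E (k + 1)]
      ([c, b, a] ++ interleave (fun i => E (i + 1)) F (List.Ico (k + 2) n).reverse ++ [E (k + 2)])
      (E k)
  exact htop.trans hbottom

theorem reflTransGen_stageWords_zero (hk : k < n) :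
    ReflTransGen WordMove (stageWords a b c z E F n k) (stageWords a b c z E F n 0) := by
  induction k with
  | zero => exact .refl
  | succ k ih => exact (reflTransGen_stageWords_succ a b c z E F hk).trans (ih (by omega))

theorem reflTransGen_stageWords_zero_targetWords (hn : 0 < n) :
    ReflTransGen WordMove (stageWords a b c z E F n 0) (targetWords a b c z E F n) := by
  have hIco : List.Ico 0 n = 0 :: List.Ico 1 n := List.Ico.eq_cons hn
  have htop : ReflTransGen WordMove (stageWords a b c z E F n 0)
      ((targetWords a b c z E F n).1, (stageWords a b c z E F n 0).2) := by
    simpa [stageWords, targetWords, hIco] using reflTransGen_wordMove_rotate_top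
      (z :: F 0 :: E 0 :: c :: b :: a :: interleave (fun i => E (i + 1)) F (List.Ico 1 n).reverse)
      (a :: interleave F (fun i => E (i + 1)) (List.Ico 1 n).reverse ++ [F 0])
      [z] [b, c, E 0] (E 1)
  have hbottom : ReflTransGen WordMove
      ((targetWords a b c z E F n).1, (stageWords a b c z E F n 0).2)
      (targetWords a b c z E F n) := by
    simpa [stageWords, targetWords, hIco] using reflTransGen_wordMove_rotate_bottom
      (a :: interleave F (fun i => E (i + 1)) (List.Ico 0 n).reverse ++ [b, c, E 0])
      [] [F 0, E 0, c, b, a]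
      (interleave (fun i => E (i + 1)) F (List.Ico 1 n).reverse ++ [E 1]) z
  exact htop.trans hbottom

theorem reflTransGen_sourceWords_targetWords (hn : 0 < n) :
    ReflTransGen WordMove (sourceWords a b c z E F n) (targetWords a b c z E F n) := by
  obtain ⟨m, rfl⟩ := Nat.exists_eq_add_one.2 hn
  exact ((reflTransGen_sourceWords_stageWords a b c z E F m).trans
    (reflTransGen_stageWords_zero a b c z E F m.lt_succ_self)).trans
    (reflTransGen_stageWords_zero_targetWords a b c z E F hn)

end Path

section Positions

variable {n : ℕ} {a b c z : A} {E F : ℕ → A} {π : RPair A}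

theorem words_eq_sourceWords (hcard : Fintype.card A = 2 * n + 5)
    (h0a : (π false a : ℕ) = 0) (h0b : (π false b : ℕ) = 1) (h0c : (π false c : ℕ) = 2)
    (h0E : ∀ i < n, (π false (E i) : ℕ) = 3 + 2 * i)
    (h0F : ∀ i < n, (π false (F i) : ℕ) = 4 + 2 * i)
    (h0d : (π false (E n) : ℕ) = 2 * n + 3) (h0z : (π false z : ℕ) = 2 * n + 4)
    (h1z : (π true z : ℕ) = 0)
    (h1F : ∀ i < n, (π true (F i) : ℕ) = 1 + 2 * i)
    (h1E : ∀ i < n, (π true (E i) : ℕ) = 2 + 2 * i)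
    (h1d : (π true (E n) : ℕ) = 2 * n + 1) (h1c : (π true c : ℕ) = 2 * n + 2)
    (h1b : (π true b : ℕ) = 2 * n + 3) (h1a : (π true a : ℕ) = 2 * n + 4) :
    words π = sourceWords a b c z E F n := by
  refine Prod.ext (word_eq_of_consecutiveFrom (by simp [sourceWords, hcard]) ?_)
    (word_eq_of_consecutiveFrom (by simp [sourceWords, hcard]) ?_)
  · simp only [sourceWords, List.cons_append, consecutiveFrom_cons, consecutiveFrom_append,
      length_interleave, List.length_range]
    exact ⟨h0a, h0b, h0c, consecutiveFrom_interleave_range h0E h0F, by omega, by omega,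
      consecutiveFrom_nil _ _⟩
  · simp only [sourceWords, List.cons_append, consecutiveFrom_cons, consecutiveFrom_append,
      length_interleave, List.length_range]
    exact ⟨h1z, consecutiveFrom_interleave_range h1F h1E, by omega, by omega, by omega, by omega,
      consecutiveFrom_nil _ _⟩

theorem words_eq_targetWords (hcard : Fintype.card A = 2 * n + 5)
    (h0a : (π false a : ℕ) = 0)
    (h0F : ∀ i < n, (π false (F i) : ℕ) = 1 + 2 * (n - 1 - i))
    (h0E : ∀ i < n, (π false (E (i + 1)) : ℕ) = 2 + 2 * (n - 1 - i))
    (h0b : (π false b : ℕ) = 2 * n + 1) (h0c : (π false c : ℕ) = 2 * n + 2)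
    (h0E_zero : (π false (E 0) : ℕ) = 2 * n + 3) (h0z : (π false z : ℕ) = 2 * n + 4)
    (h1z : (π true z : ℕ) = 0)
    (h1E : ∀ i < n, (π true (E (i + 1)) : ℕ) = 1 + 2 * (n - 1 - i))
    (h1F : ∀ i < n, (π true (F i) : ℕ) = 2 + 2 * (n - 1 - i))
    (h1E_zero : (π true (E 0) : ℕ) = 2 * n + 1) (h1c : (π true c : ℕ) = 2 * n + 2)
    (h1b : (π true b : ℕ) = 2 * n + 3) (h1a : (π true a : ℕ) = 2 * n + 4) :
    words π = targetWords a b c z E F n := by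
  refine Prod.ext (word_eq_of_consecutiveFrom (by simp [targetWords, hcard]) ?_)
    (word_eq_of_consecutiveFrom (by simp [targetWords, hcard]) ?_)
  · simp only [targetWords, List.cons_append, consecutiveFrom_cons, consecutiveFrom_append,
      length_interleave, List.length_reverse, List.Ico.length]
    exact ⟨h0a, consecutiveFrom_interleave_reverse_Ico h0F h0E, by omega, by omega, by omega,
      by omega, consecutiveFrom_nil _ _⟩
  · simp only [targetWords, List.cons_append, consecutiveFrom_cons, consecutiveFrom_append,
      length_interleave, List.length_reverse, List.Ico.length]
    exact ⟨h1z, consecutiveFrom_interleave_reverse_Ico h1E h1F, by omega, by omega, by omega,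
      by omega, consecutiveFrom_nil _ _⟩

end Positions

theorem exists_nat_extension {α : Type*} {n : ℕ} (e : Fin n → α) (d : α) :
    ∃ E : ℕ → α, (fun i : Fin n => E i) = e ∧ E n = d :=
  ⟨Function.extend Fin.val e fun _ => d, funext (Fin.val_injective.extend_apply e _),
    Function.extend_apply' _ _ _ fun ⟨i, hi⟩ => i.isLt.ne hi⟩

end RauzyInduction

/-- for `A = {a,b,c,d,e₁,…,e_n,f₁,…,f_n,z}` (2n+5 distinct letters),
`π̃₀ : a b c e₁ f₁ … e_n f_n d z`, `π̃₁ : z f₁ e₁ … f_n e_n d c b a` is irreducible,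
and the pair `π₀ : a f_n d f_{n−1} e_n … f₁ e₂ b c e₁ z`,
`π₁ : z d f_n e_n f_{n−1} e_{n−1} … e₂ f₁ e₁ c b a` is in its Rauzy class.
(Positions 0-indexed; `e i` denotes `e_{i+1}`.) -/
theorem stmt19 {A : Type*} [Fintype A] [DecidableEq A] [Nonempty A]
    (n : ℕ) (hn : 1 ≤ n) (a b c d z : A) (e f : Fin n → A)
    (hcard : Fintype.card A = 2 * n + 5)
    (pt π : RPair A)
    -- π̃₀ lists a, b, c, e₁, f₁, …, e_n, f_n, d, z
    (ht0a : (pt false a : ℕ) = 0) (ht0b : (pt false b : ℕ) = 1)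
    (ht0c : (pt false c : ℕ) = 2)
    (ht0e : ∀ i : Fin n, (pt false (e i) : ℕ) = 3 + 2 * (i : ℕ))
    (ht0f : ∀ i : Fin n, (pt false (f i) : ℕ) = 4 + 2 * (i : ℕ))
    (ht0d : (pt false d : ℕ) = 2 * n + 3) (ht0z : (pt false z : ℕ) = 2 * n + 4)
    -- π̃₁ lists z, f₁, e₁, f₂, e₂, …, f_n, e_n, d, c, b, a
    (ht1z : (pt true z : ℕ) = 0)
    (ht1f : ∀ i : Fin n, (pt true (f i) : ℕ) = 1 + 2 * (i : ℕ))
    (ht1e : ∀ i : Fin n, (pt true (e i) : ℕ) = 2 + 2 * (i : ℕ))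
    (ht1d : (pt true d : ℕ) = 2 * n + 1) (ht1c : (pt true c : ℕ) = 2 * n + 2)
    (ht1b : (pt true b : ℕ) = 2 * n + 3) (ht1a : (pt true a : ℕ) = 2 * n + 4)
    -- π₀ lists a, f_n, d, f_{n−1}, e_n, …, f₁, e₂, b, c, e₁, z
    (h0a : (π false a : ℕ) = 0)
    (h0f : ∀ i : Fin n, (π false (f i) : ℕ) = 2 * (n - 1 - (i : ℕ)) + 1)
    (h0d : (π false d : ℕ) = 2)
    (h0e : ∀ i : Fin n, (π false (e i) : ℕ) =
      if (i : ℕ) = 0 then 2 * n + 3 else 2 * (n - 1 - (i : ℕ)) + 4)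
    (h0b : (π false b : ℕ) = 2 * n + 1) (h0c : (π false c : ℕ) = 2 * n + 2)
    (h0z : (π false z : ℕ) = 2 * n + 4)
    -- π₁ lists z, d, f_n, e_n, f_{n−1}, e_{n−1}, …, e₂, f₁, e₁, c, b, a
    (h1z : (π true z : ℕ) = 0) (h1d : (π true d : ℕ) = 1)
    (h1f : ∀ i : Fin n, (π true (f i) : ℕ) = 2 + 2 * (n - 1 - (i : ℕ)))
    (h1e : ∀ i : Fin n, (π true (e i) : ℕ) = 3 + 2 * (n - 1 - (i : ℕ)))
    (h1c : (π true c : ℕ) = 2 * n + 2) (h1b : (π true b : ℕ) = 2 * n + 3)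
    (h1a : (π true a : ℕ) = 2 * n + 4) :
    PairIrreducible pt ∧ π ∈ RClass pt := by
  obtain ⟨E, rfl, rfl⟩ := RauzyInduction.exists_nat_extension e d
  obtain ⟨F, rfl, -⟩ := RauzyInduction.exists_nat_extension f (E n)
  have h0E (i : ℕ) (hi : i < n) : (π false (E (i + 1)) : ℕ) = 2 + 2 * (n - 1 - i) := by
    obtain hlt | rfl := Nat.lt_or_eq_of_le (Nat.succ_le_of_lt hi)
    · exact (h0e ⟨i + 1, hlt⟩).trans (by rw [if_neg i.succ_ne_zero]; dsimp only; omega)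
    · exact h0d.trans (by omega)
  have h1E (i : ℕ) (hi : i < n) : (π true (E (i + 1)) : ℕ) = 1 + 2 * (n - 1 - i) := by
    obtain hlt | rfl := Nat.lt_or_eq_of_le (Nat.succ_le_of_lt hi)
    · exact (h1e ⟨i + 1, hlt⟩).trans (by dsimp only; omega)
    · exact h1d.trans (by omega)
  have hsource := RauzyInduction.words_eq_sourceWords hcard ht0a ht0b ht0c
    (Fin.forall_iff.1 ht0e) (Fin.forall_iff.1 ht0f) ht0d ht0z ht1z
    (Fin.forall_iff.1 ht1f) (Fin.forall_iff.1 ht1e) ht1d ht1c ht1b ht1a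
  have htarget := RauzyInduction.words_eq_targetWords hcard h0a
    (fun i hi => (h0f ⟨i, hi⟩).trans (add_comm _ _)) h0E h0b h0c ((h0e ⟨0, hn⟩).trans (if_pos rfl))
    h0z h1z h1E (Fin.forall_iff.1 h1f) ((h1e ⟨0, hn⟩).trans (by dsimp only; omega)) h1c h1b h1a
  refine ⟨RauzyInduction.pairIrreducible_of_first_eq_last ht0a (by omega),
    RauzyInduction.mem_rClass_of_reflTransGen_wordMove ?_⟩
  rw [hsource, htarget]
  exact RauzyInduction.reflTransGen_sourceWords_targetWords a b c z E F hn
end
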